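/- arXiv:2410.07984 — 2 statements merged into one kernel-verified Lean document; each statement's English description precedes it below -/
import Mathlib

section
/- Let P_{XY} be a probability distribution on a finite set X×Y, let Φ_{Y^n} be the uniform mixture over type classes of Y^n, and let g: ℕ → ℝ be a sub-exponential function (i.e., lim_{n→∞} (1/n) log₂ g(n) = 0) satisfying g(n) > (n+1)^{|Y|}. For fixed r ∈ ℝ, define p_n := P_{XY}^{×n}( {(x^n,y^n) : P_{XY}^{×n}(x^n,y^n) ≥ g(n)·2^{nr}·P_X^{×n}(x^n)·Φ_{Y^n}(y^n)} ). Then lim_{n→∞} (−1/n) log₂ p_n = sup_{t≥0} t(r − I_{1+t}(X:Y)_{P_{XY}}) (with the limit equal to ∞ when r ≥ I_∞(X:Y)_{P_{XY}}). -/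
open scoped ENNReal NNReal BigOperators Classical
open Filter

noncomputable section

namespace RST

/-- Base-2 logarithm `ℝ≥0∞ → EReal`, with `log 0 = ⊥` and `log ⊤ = ⊤`. -/
def elog2 (s : ℝ≥0∞) : EReal :=
  if s = 0 then ⊥ else if s = ⊤ then ⊤ else ((Real.logb 2 s.toReal : ℝ) : EReal)

/-- Base-2 logarithm `EReal → EReal` (for nonnegative arguments). -/
def eLog2 (x : EReal) : EReal :=
  if x = ⊤ then ⊤ else if x ≤ 0 then ⊥ else ((Real.logb 2 x.toReal : ℝ) : EReal)

/-- Base-2 exponential `EReal → ℝ≥0∞`. -/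
def epow2 (x : EReal) : ℝ≥0∞ :=
  if x = ⊤ then ⊤ else if x = ⊥ then 0 else ENNReal.ofReal ((2 : ℝ) ^ x.toReal)

variable {X Y : Type*}

/-- A probability distribution on a finite alphabet, as an `ℝ≥0∞`-valued function. -/
def IsDist [Fintype X] (P : X → ℝ≥0∞) : Prop := ∑ x, P x = 1

/-- A discrete memoryless channel: every row is a probability distribution. -/
def IsChannel [Fintype X] [Fintype Y] (W : X → Y → ℝ≥0∞) : Prop := ∀ x, ∑ y, W x y = 1

/-- Order-`α` Rényi divergence (base 2), with the order `α ∈ [0,∞]` encoded as `ℝ≥0∞`.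
The conventions `0/0 = 0` and `a/0 = ∞` (for `a > 0`, `α > 1`) are built into `ℝ≥0∞`
arithmetic.  The second argument is allowed to be an arbitrary nonnegative vector. -/
def renyiD [Fintype X] (α : ℝ≥0∞) (P Q : X → ℝ≥0∞) : EReal :=
  if α = 0 then - elog2 (∑ x ∈ Finset.univ.filter fun x => P x ≠ 0, Q x)
  else if α = 1 then ∑ x, ((P x).toReal : EReal) * elog2 (P x / Q x)
  else if α = ⊤ then elog2 (⨆ x, P x / Q x)
  else (((α.toReal - 1)⁻¹ : ℝ) : EReal) *
    elog2 (∑ x, P x ^ α.toReal * Q x ^ (1 - α.toReal))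

/-- The `X`-marginal of a joint distribution on `X × Y`. -/
def margX [Fintype X] [Fintype Y] (P : X × Y → ℝ≥0∞) : X → ℝ≥0∞ := fun x => ∑ y, P (x, y)

/-- Order-`α` Rényi mutual information `I_α(X:Y)_P = min_{Q_Y} D_α(P‖P_X × Q_Y)`. -/
def renyiMI [Fintype X] [Fintype Y] (α : ℝ≥0∞) (P : X × Y → ℝ≥0∞) : EReal :=
  ⨅ Q : {Q : Y → ℝ≥0∞ // IsDist Q}, renyiD α P fun p => margX P p.1 * Q.1 p.2

/-- The joint input-output distribution `P_X · W`. -/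
def joint [Fintype X] [Fintype Y] (PX : X → ℝ≥0∞) (W : X → Y → ℝ≥0∞) : X × Y → ℝ≥0∞ :=
  fun p => PX p.1 * W p.1 p.2

/-- Order-`α` Rényi capacity `I_α(W) = max_{P_X} I_α(X:Y)_{P_X · W}`. -/
def renyiCap [Fintype X] [Fintype Y] (α : ℝ≥0∞) (W : X → Y → ℝ≥0∞) : EReal :=
  ⨆ P : {P : X → ℝ≥0∞ // IsDist P}, renyiMI α (joint P.1 W)

/-- `N` is a simulation of a channel `X → Y` with communication cost at most `c` bits:
shared randomness `K = Fin m` with distribution `PK`, a message set `{1,…,M}` with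
`log₂ M ≤ c`, an encoder `E` and a decoder `D`. -/
def IsSimulation [Fintype X] [Fintype Y] (c : ℝ) (N : X → Y → ℝ≥0∞) : Prop :=
  ∃ (m M : ℕ) (PK : Fin m → ℝ≥0∞) (E : X → Fin m → Fin M → ℝ≥0∞)
    (D : Fin M → Fin m → Y → ℝ≥0∞),
    0 < M ∧ Real.logb 2 M ≤ c ∧ (∑ k, PK k = 1) ∧
    (∀ x k, ∑ j, E x k j = 1) ∧ (∀ j k, ∑ y, D j k y = 1) ∧
    ∀ x y, N x y = ∑ k, ∑ j, PK k * E x k j * D j k y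

/-- `D_α(W, N) := max_x D_α(W(·|x) ‖ N(·|x))`. -/
def chD [Fintype X] [Fintype Y] (α : ℝ≥0∞) (W N : X → Y → ℝ≥0∞) : EReal :=
  ⨆ x, renyiD α (W x) (N x)

/-- `𝖣_α(W, c) := min_{N ∈ A(W,c)} D_α(W, N)`. -/
def simD [Fintype X] [Fintype Y] (α : ℝ≥0∞) (W : X → Y → ℝ≥0∞) (c : ℝ) : EReal :=
  ⨅ N : {N : X → Y → ℝ≥0∞ // IsSimulation c N}, chD α W N.1

/-- The `n`-fold memoryless extension `W^{×n}` of a channel `W`. -/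
def prodCh [Fintype X] [Fintype Y] (n : ℕ) (W : X → Y → ℝ≥0∞) :
    (Fin n → X) → (Fin n → Y) → ℝ≥0∞ :=
  fun xs ys => ∏ i, W (xs i) (ys i)

/-- A sequence of communication costs with rate at most `r`. -/
def RateOK (r : ℝ) (c : ℕ → ℝ) : Prop :=
  (∀ n, 0 ≤ c n) ∧ Filter.limsup (fun n : ℕ => ((c n / n : ℝ) : EReal)) Filter.atTop ≤ (r : EReal)

/-- Reliability function `E_rf^{(α)}(W, r)`. -/
def Erf [Fintype X] [Fintype Y] (α : ℝ≥0∞) (W : X → Y → ℝ≥0∞) (r : ℝ) : EReal :=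
  ⨆ c : {c : ℕ → ℝ // RateOK r c},
    Filter.liminf
      (fun n : ℕ => (((-1 : ℝ) / n : ℝ) : EReal) * eLog2 (simD α (prodCh n W) (c.1 n)))
      Filter.atTop

/-- Strong converse exponent `E_sc^{(α)}(W, r)`. -/
def Esc [Fintype X] [Fintype Y] (α : ℝ≥0∞) (W : X → Y → ℝ≥0∞) (r : ℝ) : EReal :=
  ⨅ c : {c : ℕ → ℝ // RateOK r c},
    Filter.limsup
      (fun n : ℕ => (((1 : ℝ) / n : ℝ) : EReal) * simD α (prodCh n W) (c.1 n))
      Filter.atTop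

/-- The `α`-Rényi simulation rate `R_RST^{(α)}(W)`. -/
def Rrst [Fintype X] [Fintype Y] (α : ℝ≥0∞) (W : X → Y → ℝ≥0∞) : EReal :=
  ⨅ c : {c : ℕ → ℝ // (∀ n, 0 ≤ c n) ∧
      Filter.limsup (fun n : ℕ => simD α (prodCh n W) (c n)) Filter.atTop = 0},
    Filter.limsup (fun n : ℕ => ((c.1 n / n : ℝ) : EReal)) Filter.atTop

/-- n-fold product of a joint distribution on `X × Y`, as a distribution on pairs of
sequences. -/
def prodJoint [Fintype X] [Fintype Y] (n : ℕ) (P : X × Y → ℝ≥0∞) :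
    (Fin n → X) × (Fin n → Y) → ℝ≥0∞ :=
  fun p => ∏ i, P (p.1 i, p.2 i)

/-- n-fold product distribution. -/
def prodDist [Fintype X] (n : ℕ) (P : X → ℝ≥0∞) : (Fin n → X) → ℝ≥0∞ :=
  fun xs => ∏ i, P (xs i)

/-- The type (empirical count vector) of a sequence. -/
def seqType [Fintype Y] [DecidableEq Y] {n : ℕ} (ys : Fin n → Y) : Y → ℕ :=
  fun y => (Finset.univ.filter fun i => ys i = y).card

/-- The cardinality of the type class of a sequence. -/
def typeClassCard [Fintype Y] [DecidableEq Y] {n : ℕ} (ys : Fin n → Y) : ℕ :=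
  (Finset.univ.filter fun zs : Fin n → Y => seqType zs = seqType ys).card

/-- The number of types of sequences in `Y^n`. -/
def numTypes (Y : Type*) [Fintype Y] [DecidableEq Y] (n : ℕ) : ℕ :=
  (Finset.univ.image fun ys : Fin n → Y => seqType ys).card

/-- `Φ_{Y^n}`: the uniform mixture over type classes of `Y^n`. -/
def PhiY (Y : Type*) [Fintype Y] [DecidableEq Y] (n : ℕ) : (Fin n → Y) → ℝ≥0∞ :=
  fun ys => ((numTypes Y n : ℝ≥0∞) * (typeClassCard ys : ℝ≥0∞))⁻¹

end RST

namespace RSTaux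

lemma exists_gt_of_deriv_pos {f : ℝ → ℝ} {f' x : ℝ} (hf : HasDerivAt f f' x) (h : 0 < f')
    {δ : ℝ} (hδ : 0 < δ) : ∃ s, x < s ∧ s < x + δ ∧ f x < f s := by
  have h1 := (hasDerivAt_iff_tendsto_slope.1 hf).mono_left
    (nhdsWithin_mono x (fun y (hy : y ∈ Set.Ioi x) => ne_of_gt hy))
  have h2 : ∀ᶠ s in nhdsWithin x (Set.Ioi x), 0 < slope f x s := h1.eventually (lt_mem_nhds h)
  have h3 : ∀ᶠ s in nhdsWithin x (Set.Ioi x), s ∈ Set.Ioo x (x + δ) :=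
    Ioo_mem_nhdsGT (by linarith)
  obtain ⟨s, hs, hs'⟩ := (h2.and h3).exists
  refine ⟨s, hs'.1, hs'.2, ?_⟩
  rw [slope_def_field] at hs
  have : 0 < s - x := by linarith [hs'.1]
  have := (div_pos_iff_of_pos_right this).1 hs
  linarith

lemma exists_lt_of_deriv_neg {f : ℝ → ℝ} {f' x : ℝ} (hf : HasDerivAt f f' x) (h : f' < 0)
    {δ : ℝ} (hδ : 0 < δ) : ∃ s, x < s ∧ s < x + δ ∧ f s < f x := by
  obtain ⟨s, h1, h2, h3⟩ := exists_gt_of_deriv_pos hf.neg (by linarith) hδ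
  exact ⟨s, h1, h2, by simpa using h3⟩

lemma sum_prod_single {X R : Type*} [Fintype X] [CommSemiring R] (n : ℕ) (V : X → R) :
    ∑ w : (Fin n → X), ∏ i, V (w i) = (∑ z, V z) ^ n := by
  have : (∑ z, V z) ^ n = ∏ _i : Fin n, ∑ z, V z := by simp
  rw [this, Finset.prod_univ_sum, Fintype.piFinset_univ]

/-- Chernoff bound. -/
lemma chernoff {Z : Type*} [Fintype Z] (V : Z → ℝ) (hV : ∀ z, 0 ≤ V z) (hV1 : ∑ z, V z = 1)
    (h : Z → ℝ) (c : ℝ) (hc : ∑ z, V z * h z < c) :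
    ∃ ρ : ℝ, 0 ≤ ρ ∧ ρ < 1 ∧ ∀ n : ℕ,
      ∑ z : Fin n → Z, (if n * c ≤ ∑ i, h (z i) then ∏ i, V (z i) else 0) ≤ ρ ^ n := by
  have hd : HasDerivAt (fun s : ℝ => ∑ z, V z * Real.exp (s * (h z - c)))
      (∑ z, V z * (Real.exp (0 * (h z - c)) * (1 * (h z - c)))) 0 := by
    apply HasDerivAt.fun_sum
    intro z _
    exact (((hasDerivAt_id (0:ℝ)).mul_const (h z - c)).exp).const_mul (V z)
  have hneg : (∑ z, V z * (Real.exp (0 * (h z - c)) * (1 * (h z - c)))) < 0 := by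
    have : (∑ z, V z * (Real.exp (0 * (h z - c)) * (1 * (h z - c))))
        = ∑ z, V z * h z - c * ∑ z, V z := by
      rw [Finset.mul_sum, ← Finset.sum_sub_distrib]
      refine Finset.sum_congr rfl fun z _ => ?_
      simp; ring
    rw [this, hV1]; linarith
  obtain ⟨s, hs0, -, hs⟩ := exists_lt_of_deriv_neg hd hneg one_pos
  simp only [zero_mul, Real.exp_zero, mul_one, hV1] at hs
  refine ⟨_, Finset.sum_nonneg fun z _ => mul_nonneg (hV z) (Real.exp_pos _).le, hs, fun n => ?_⟩
  rw [← sum_prod_single]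
  refine Finset.sum_le_sum fun z _ => ?_
  have hp : 0 ≤ ∏ i, V (z i) := Finset.prod_nonneg fun i _ => hV _
  rw [Finset.prod_mul_distrib, ← Real.exp_sum]
  split_ifs with hz
  · refine le_mul_of_one_le_right hp (Real.one_le_exp ?_)
    rw [← Finset.mul_sum, Finset.sum_sub_distrib]
    simp only [Finset.sum_const, Finset.card_univ, Fintype.card_fin, nsmul_eq_mul]
    exact mul_nonneg hs0.le (by linarith)
  · positivity

lemma chernoff_pair {X Y : Type*} [Fintype X] [Fintype Y] (V : X × Y → ℝ) (hV : ∀ z, 0 ≤ V z)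
    (hV1 : ∑ z, V z = 1) (h : X × Y → ℝ) (c : ℝ) (hc : ∑ z, V z * h z < c) :
    ∃ ρ : ℝ, 0 ≤ ρ ∧ ρ < 1 ∧ ∀ n : ℕ,
      ∑ w : (Fin n → X) × (Fin n → Y), (if n * c ≤ ∑ i, h (w.1 i, w.2 i)
        then ∏ i, V (w.1 i, w.2 i) else 0) ≤ ρ ^ n := by
  obtain ⟨ρ, h0, h1, h2⟩ := chernoff V hV hV1 h c hc
  refine ⟨ρ, h0, h1, fun n => le_of_eq_of_le ?_ (h2 n)⟩
  exact (Fintype.sum_equiv (Equiv.arrowProdEquivProdArrow (Fin n) (fun _ => X) (fun _ => Y)) _ _ (fun z => rfl)).symm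

lemma sum_prod_pair {X Y R : Type*} [Fintype X] [Fintype Y] [CommSemiring R] (n : ℕ) (V : X × Y → R) :
    ∑ w : (Fin n → X) × (Fin n → Y), ∏ i, V (w.1 i, w.2 i) = (∑ z, V z) ^ n := by
  rw [← sum_prod_single]
  exact (Fintype.sum_equiv (Equiv.arrowProdEquivProdArrow (Fin n) (fun _ => X) (fun _ => Y)) _ _ (fun z => rfl)).symm

lemma sum_prod_marg {X Y R : Type*} [Fintype X] [CommSemiring R] (n : ℕ)
    (V : X × Y → R) (y : Fin n → Y) :
    ∑ x : Fin n → X, ∏ i, V (x i, y i) = ∏ i, ∑ x, V (x, y i) := by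
  rw [Finset.prod_univ_sum]
  simp only [Fintype.piFinset_univ]

/-- change of measure lower bound -/
lemma change_measure {X Y : Type*} [Fintype X] [Fintype Y] (p V ℓ : X × Y → ℝ)
    (hp : ∀ z, 0 ≤ p z) (hV : ∀ z, 0 ≤ V z) (hV1 : ∑ z, V z = 1) (hVp : ∀ z, 0 < V z → 0 < p z)
    (D M : ℝ) (hD : ∑ z, V z * Real.log (V z / p z) = D)
    (hM : ∑ z, V z * (ℓ z - Real.log (∑ x, V (x, z.2))) = M)
    (Φ : ∀ n : ℕ, (Fin n → Y) → ℝ) (hΦ : ∀ n y, 0 ≤ Φ n y) (hΦ1 : ∀ n, ∑ y, Φ n y ≤ 1)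
    (g : ℕ → ℝ) (hg : ∀ n, 0 < g n)
    (hg0 : Tendsto (fun n : ℕ => Real.log (g n) / n) atTop (nhds 0))
    (R ε : ℝ) (hR : R < M) (hε : 0 < ε) :
    ∀ᶠ n : ℕ in atTop, 1 / 2 * Real.exp (-(n * (D + ε))) ≤
      ∑ w : (Fin n → X) × (Fin n → Y),
        if (∀ i, 0 < p (w.1 i, w.2 i)) ∧
          g n * Real.exp (n * R) * Φ n w.2 ≤ Real.exp (∑ i, ℓ (w.1 i, w.2 i))
        then ∏ i, p (w.1 i, w.2 i) else 0 := by
  set VY : Y → ℝ := fun y => ∑ x, V (x, y) with hVY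
  have hVYpos : ∀ x y, 0 < V (x, y) → 0 < VY y := fun x y h =>
    lt_of_lt_of_le h (Finset.single_le_sum (f := fun x => V (x, y)) (fun x _ => hV _) (Finset.mem_univ x))
  have hVY0 : ∀ y, 0 ≤ VY y := fun y => Finset.sum_nonneg fun x _ => hV _
  obtain ⟨δ, hδ, hδM⟩ : ∃ δ : ℝ, 0 < δ ∧ R + 4 * δ = M := ⟨(M - R) / 4, by linarith, by ring⟩
  obtain ⟨ρ1, h10, h11, H1⟩ := chernoff_pair V hV hV1 (fun z => Real.log (V z / p z)) (D + ε)
    (by rw [hD]; linarith)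
  obtain ⟨ρ2, h20, h21, H2⟩ := chernoff_pair V hV hV1 (fun z => Real.log (VY z.2) - ℓ z) (-M + δ)
    (by
      have : ∑ z, V z * (Real.log (VY z.2) - ℓ z) = - M := by
        rw [← hM, ← Finset.sum_neg_distrib]
        exact Finset.sum_congr rfl fun z _ => by simp only [hVY]; ring
      rw [this]; linarith)
  have H3 : ∀ n : ℕ, ∑ w : (Fin n → X) × (Fin n → Y),
      (if Real.exp (n * δ) * ∏ i, VY (w.2 i) ≤ Φ n w.2 then ∏ i, V (w.1 i, w.2 i) else 0)
        ≤ Real.exp (-δ) ^ n := by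
    intro n
    rw [Fintype.sum_prod_type_right]
    calc _ ≤ ∑ y : Fin n → Y, Real.exp (-δ) ^ n * Φ n y := by
          refine Finset.sum_le_sum fun y _ => ?_
          dsimp only
          split_ifs with hy
          · rw [sum_prod_marg]
            have : Real.exp (-δ) ^ n * (Real.exp (n * δ) * ∏ i, VY (y i)) = ∏ i, VY (y i) := by
              rw [← mul_assoc, ← Real.exp_nat_mul, ← Real.exp_add]; simp
            calc _ = Real.exp (-δ) ^ n * (Real.exp (n * δ) * ∏ i, VY (y i)) := this.symm
              _ ≤ _ := mul_le_mul_of_nonneg_left hy (by positivity)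
          · simp only [Finset.sum_const_zero]
            exact mul_nonneg (by positivity) (hΦ n y)
      _ ≤ _ := by
          rw [← Finset.mul_sum]
          exact mul_le_of_le_one_right (by positivity) (hΦ1 n)
  have hlim : Tendsto (fun n : ℕ => ρ1 ^ n + ρ2 ^ n + Real.exp (-δ) ^ n) atTop (nhds (0 + 0 + 0)) :=
    ((tendsto_pow_atTop_nhds_zero_of_lt_one h10 h11).add
      (tendsto_pow_atTop_nhds_zero_of_lt_one h20 h21)).add
      (tendsto_pow_atTop_nhds_zero_of_lt_one (Real.exp_pos _).le (by rw [Real.exp_lt_one_iff]; linarith))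
  have e1 : ∀ᶠ n : ℕ in atTop, ρ1 ^ n + ρ2 ^ n + Real.exp (-δ) ^ n < 1 / 2 :=
    hlim.eventually (gt_mem_nhds (by norm_num))
  have e2 : ∀ᶠ n : ℕ in atTop, Real.log (g n) / n < 2 * δ := hg0.eventually (gt_mem_nhds (by linarith))
  filter_upwards [e1, e2, eventually_gt_atTop 0] with n hn1 hn2 hn0
  have hn0' : (0:ℝ) < n := by exact_mod_cast hn0
  have hg2 : g n ≤ Real.exp (n * (2 * δ)) := by
    rw [← Real.log_le_iff_le_exp (hg n)]
    rw [div_lt_iff₀ hn0'] at hn2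
    linarith
  have key : ∀ w : (Fin n → X) × (Fin n → Y), Real.exp (-(n * (D + ε))) * (∏ i, V (w.1 i, w.2 i)
      - (if n * (D + ε) ≤ ∑ i, Real.log (V (w.1 i, w.2 i) / p (w.1 i, w.2 i)) then ∏ i, V (w.1 i, w.2 i) else 0)
      - (if n * (-M + δ) ≤ ∑ i, (Real.log (VY (w.2 i)) - ℓ (w.1 i, w.2 i)) then ∏ i, V (w.1 i, w.2 i) else 0)
      - (if Real.exp (n * δ) * ∏ i, VY (w.2 i) ≤ Φ n w.2 then ∏ i, V (w.1 i, w.2 i) else 0)) ≤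
      if (∀ i, 0 < p (w.1 i, w.2 i)) ∧
          g n * Real.exp (n * R) * Φ n w.2 ≤ Real.exp (∑ i, ℓ (w.1 i, w.2 i))
        then ∏ i, p (w.1 i, w.2 i) else 0 := by
    rintro ⟨x, y⟩
    dsimp only
    have hVn : 0 ≤ ∏ i, V (x i, y i) := Finset.prod_nonneg fun i _ => hV _
    have hrhs : 0 ≤ if (∀ i, 0 < p (x i, y i)) ∧
          g n * Real.exp (n * R) * Φ n y ≤ Real.exp (∑ i, ℓ (x i, y i))
        then ∏ i, p (x i, y i) else 0 := by
      split_ifs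
      · exact Finset.prod_nonneg fun i _ => hp _
      · exact le_rfl
    rcases hVn.eq_or_lt with h0 | h0
    · rw [← h0]; simpa using hrhs
    have hVi : ∀ i, 0 < V (x i, y i) := fun i => (hV _).lt_of_ne' fun h =>
      h0.ne' (Finset.prod_eq_zero (Finset.mem_univ i) h)
    by_cases c1 : n * (D + ε) ≤ ∑ i, Real.log (V (x i, y i) / p (x i, y i))
    · refine le_trans (mul_nonpos_of_nonneg_of_nonpos (Real.exp_pos _).le ?_) hrhs
      rw [if_pos c1]
      split_ifs <;> linarith
    by_cases c2 : n * (-M + δ) ≤ ∑ i, (Real.log (VY (y i)) - ℓ (x i, y i))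
    · refine le_trans (mul_nonpos_of_nonneg_of_nonpos (Real.exp_pos _).le ?_) hrhs
      rw [if_pos c2]
      split_ifs <;> linarith
    by_cases c3 : Real.exp (n * δ) * ∏ i, VY (y i) ≤ Φ n y
    · refine le_trans (mul_nonpos_of_nonneg_of_nonpos (Real.exp_pos _).le ?_) hrhs
      rw [if_pos c3]
      split_ifs <;> linarith
    rw [if_neg c1, if_neg c2, if_neg c3]
    push Not at c1 c2 c3
    have hVYp : ∏ i, VY (y i) = Real.exp (∑ i, Real.log (VY (y i))) := by
      rw [Real.exp_sum]
      exact Finset.prod_congr rfl fun i _ => (Real.exp_log (hVYpos _ _ (hVi i))).symm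
    rw [if_pos]
    · have : ∏ i, p (x i, y i) = (∏ i, V (x i, y i)) * Real.exp (-∑ i, Real.log (V (x i, y i) / p (x i, y i))) := by
        rw [← Finset.sum_neg_distrib, Real.exp_sum, ← Finset.prod_mul_distrib]
        refine Finset.prod_congr rfl fun i _ => ?_
        have := hVi i
        have := hVp _ (hVi i)
        rw [← Real.log_inv, Real.exp_log (by positivity)]
        field_simp
      rw [this, mul_comm]
      simp only [sub_zero]
      exact mul_le_mul_of_nonneg_left (Real.exp_le_exp.2 (by linarith)) hVn
    · refine ⟨fun i => hVp _ (hVi i), ?_⟩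
      rw [Finset.sum_sub_distrib] at c2
      calc g n * Real.exp (n * R) * Φ n y
          ≤ Real.exp (n * (2 * δ)) * Real.exp (n * R) * (Real.exp (n * δ) * ∏ i, VY (y i)) := by
            have := hΦ n y
            have := hg n
            gcongr
        _ = Real.exp (n * (2 * δ) + n * R + (n * δ + ∑ i, Real.log (VY (y i)))) := by
            rw [hVYp, Real.exp_add, Real.exp_add, Real.exp_add (n * δ)]
        _ ≤ _ := Real.exp_le_exp.2 (by
            have : (n:ℝ) * (-M + δ) = - (n * (2 * δ) + n * R + n * δ) := by rw [← hδM]; ring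
            linarith)
  refine le_trans ?_ (Finset.sum_le_sum fun w _ => key w)
  rw [← Finset.mul_sum, Finset.sum_sub_distrib, Finset.sum_sub_distrib, Finset.sum_sub_distrib,
    sum_prod_pair, hV1, one_pow, mul_comm]
  refine mul_le_mul_of_nonneg_left ?_ (Real.exp_pos _).le
  linarith [H1 n, H2 n, H3 n]

end RSTaux
namespace RSTaux

section tilt
variable {X Y : Type*} [Fintype X] [Fintype Y]

def suppY (p : X × Y → ℝ) : Finset Y := Finset.univ.filter fun y => 0 < ∑ x, p (x, y)

def aF (p ℓ : X × Y → ℝ) (t : ℝ) (y : Y) : ℝ := ∑ x, p (x, y) * Real.exp (t * ℓ (x, y))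

def bF (p ℓ : X × Y → ℝ) (t : ℝ) (y : Y) : ℝ := Real.exp (Real.log (aF p ℓ t y) / (1 + t))

def AF (p ℓ : X × Y → ℝ) (t : ℝ) : ℝ := ∑ y ∈ suppY p, bF p ℓ t y

def FF (p ℓ : X × Y → ℝ) (t : ℝ) : ℝ := (1 + t) * Real.log (AF p ℓ t)

def VF (p ℓ : X × Y → ℝ) (t : ℝ) (z : X × Y) : ℝ :=
  p z * Real.exp (t * ℓ z) / aF p ℓ t z.2 * (bF p ℓ t z.2 / AF p ℓ t)

variable {p ℓ : X × Y → ℝ}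

lemma p_zero_of_not_mem (hp : ∀ z, 0 ≤ p z) {y : Y} (hy : y ∉ suppY p) (x : X) : p (x, y) = 0 := by
  simp only [suppY, Finset.mem_filter, Finset.mem_univ, true_and, not_lt] at hy
  have h0 : ∑ x, p (x, y) = 0 := le_antisymm hy (Finset.sum_nonneg fun x _ => hp _)
  exact (Finset.sum_eq_zero_iff_of_nonneg (fun x _ => hp _)).1 h0 x (Finset.mem_univ x)

lemma mem_suppY (hp : ∀ z, 0 ≤ p z) {x : X} {y : Y} (h : 0 < p (x, y)) : y ∈ suppY p := by
  by_contra hy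
  exact h.ne' (p_zero_of_not_mem hp hy x)

lemma exists_of_mem_suppY {y : Y} (hy : y ∈ suppY p) : ∃ x, 0 < p (x, y) := by
  simp only [suppY, Finset.mem_filter, Finset.mem_univ, true_and] at hy
  by_contra! h
  exact absurd hy (not_lt.2 (Finset.sum_nonpos fun x _ => h x))

lemma suppY_nonempty (hp : ∀ z, 0 ≤ p z) (hp1 : ∑ z, p z = 1) : (suppY p).Nonempty := by
  by_contra h
  rw [Finset.not_nonempty_iff_eq_empty] at h
  have : ∑ z, p z = 0 := Finset.sum_eq_zero fun z _ =>
    p_zero_of_not_mem hp (y := z.2) (by rw [h]; simp) z.1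
  linarith

lemma aF_pos (hp : ∀ z, 0 ≤ p z) {y : Y} (hy : y ∈ suppY p) (t : ℝ) : 0 < aF p ℓ t y := by
  obtain ⟨x, hx⟩ := exists_of_mem_suppY hy
  exact Finset.sum_pos' (fun x _ => mul_nonneg (hp _) (Real.exp_pos _).le)
    ⟨x, Finset.mem_univ x, mul_pos hx (Real.exp_pos _)⟩

lemma bF_pos (t : ℝ) (y : Y) : 0 < bF p ℓ t y := Real.exp_pos _

lemma AF_pos (hp : ∀ z, 0 ≤ p z) (hp1 : ∑ z, p z = 1) (t : ℝ) : 0 < AF p ℓ t :=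
  Finset.sum_pos (fun y _ => bF_pos t y) (suppY_nonempty hp hp1)

lemma aF_zero (y : Y) : aF p ℓ 0 y = ∑ x, p (x, y) := by simp [aF]

lemma FF_zero (hp : ∀ z, 0 ≤ p z) (hp1 : ∑ z, p z = 1) : FF p ℓ 0 = 0 := by
  have : AF p ℓ 0 = 1 := by
    rw [← hp1, Fintype.sum_prod_type_right, AF]
    rw [← Finset.sum_subset (Finset.subset_univ (suppY p))]
    · refine Finset.sum_congr rfl fun y hy => ?_
      rw [bF, add_zero, div_one, Real.exp_log (aF_pos hp hy 0), aF_zero]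
    · intro y _ hy
      exact Finset.sum_eq_zero fun x _ => p_zero_of_not_mem hp hy x
  simp [FF, this]

lemma VF_nonneg (hp : ∀ z, 0 ≤ p z) (hp1 : ∑ z, p z = 1) (t : ℝ) (z) : 0 ≤ VF p ℓ t z := by
  have h1 : 0 ≤ aF p ℓ t z.2 := Finset.sum_nonneg fun x _ => mul_nonneg (hp _) (Real.exp_pos _).le
  have h2 := AF_pos (ℓ := ℓ) hp hp1 t
  have h3 := bF_pos (p := p) (ℓ := ℓ) t z.2
  have := hp z
  unfold VF; positivity

lemma VF_marg (hp : ∀ z, 0 ≤ p z) (t : ℝ) {y : Y} (hy : y ∈ suppY p) :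
    ∑ x, VF p ℓ t (x, y) = bF p ℓ t y / AF p ℓ t := by
  have := aF_pos (ℓ := ℓ) hp hy t
  simp only [VF]
  rw [← Finset.sum_mul, ← Finset.sum_div]
  change aF p ℓ t y / _ * _ = _
  rw [div_self this.ne', one_mul]

lemma VF_zero {t : ℝ} {z} (h : p z = 0) : VF p ℓ t z = 0 := by simp [VF, h]

lemma VF_pos_imp (hp : ∀ z, 0 ≤ p z) {t : ℝ} {z} (h : 0 < VF p ℓ t z) : 0 < p z :=
  (hp z).lt_of_ne' fun h0 => h.ne' (VF_zero h0)

/-- reduce a V-sum to the support -/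
lemma VF_sum (hp : ∀ z, 0 ≤ p z) (t : ℝ) (f : X × Y → ℝ) :
    ∑ z, VF p ℓ t z * f z = ∑ y ∈ suppY p, ∑ x, VF p ℓ t (x, y) * f (x, y) := by
  rw [Fintype.sum_prod_type_right]
  refine (Finset.sum_subset (Finset.subset_univ (suppY p)) ?_).symm
  intro y _ hy
  exact Finset.sum_eq_zero fun x _ => by rw [VF_zero (p_zero_of_not_mem hp hy x), zero_mul]

lemma VF_sum_one (hp : ∀ z, 0 ≤ p z) (hp1 : ∑ z, p z = 1) (t : ℝ) : ∑ z, VF p ℓ t z = 1 := by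
  have h := VF_sum (ℓ := ℓ) hp t (fun _ => 1)
  simp only [mul_one] at h
  rw [h, Finset.sum_congr rfl fun y hy => VF_marg hp t hy, ← Finset.sum_div]
  exact div_self (AF_pos hp hp1 t).ne'

def MF (p ℓ : X × Y → ℝ) (t : ℝ) : ℝ :=
  ∑ z, VF p ℓ t z * (ℓ z - Real.log (∑ x, VF p ℓ t (x, z.2)))

def DF (p ℓ : X × Y → ℝ) (t : ℝ) : ℝ :=
  ∑ z, VF p ℓ t z * Real.log (VF p ℓ t z / p z)

lemma log_q (hp : ∀ z, 0 ≤ p z) (hp1 : ∑ z, p z = 1) (t : ℝ) {y : Y} (hy : y ∈ suppY p) :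
    Real.log (∑ x, VF p ℓ t (x, y)) = Real.log (aF p ℓ t y) / (1 + t) - Real.log (AF p ℓ t) := by
  rw [VF_marg hp t hy, Real.log_div (bF_pos t y).ne' (AF_pos hp hp1 t).ne', bF, Real.log_exp]

lemma DF_eq (hp : ∀ z, 0 ≤ p z) (hp1 : ∑ z, p z = 1) {t : ℝ} (ht : 0 ≤ t) :
    DF p ℓ t = t * MF p ℓ t - FF p ℓ t := by
  have h1 : FF p ℓ t = ∑ z, VF p ℓ t z * FF p ℓ t := by
    rw [← Finset.sum_mul, VF_sum_one hp hp1, one_mul]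
  rw [h1, DF, MF, Finset.mul_sum, ← Finset.sum_sub_distrib]
  refine Finset.sum_congr rfl fun z _ => ?_
  obtain ⟨x, y⟩ := z
  rcases (hp (x, y)).eq_or_lt with h0 | h0
  · rw [VF_zero h0.symm]; simp
  have hy := mem_suppY hp h0
  have ha := aF_pos (ℓ := ℓ) hp hy t
  have hA := AF_pos (ℓ := ℓ) hp hp1 t
  have hb := bF_pos (p := p) (ℓ := ℓ) t y
  have hq := log_q (ℓ := ℓ) hp hp1 t hy
  dsimp only
  have e : Real.log (VF p ℓ t (x, y) / p (x, y)) = t * ℓ (x, y) - Real.log (aF p ℓ t y)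
      + (Real.log (aF p ℓ t y) / (1 + t) - Real.log (AF p ℓ t)) := by
    have : VF p ℓ t (x, y) / p (x, y) = Real.exp (t * ℓ (x, y)) / aF p ℓ t y * (bF p ℓ t y / AF p ℓ t) := by
      simp only [VF]; field_simp
    rw [this, Real.log_mul (by positivity) (by positivity), Real.log_div (by positivity) ha.ne',
      Real.log_div hb.ne' hA.ne', Real.log_exp, bF, Real.log_exp]
  rw [e, hq, FF]
  have : (1 + t) ≠ 0 := by positivity
  field_simp
  ring

lemma hasDerivAt_FF (hp : ∀ z, 0 ≤ p z) (hp1 : ∑ z, p z = 1) {t : ℝ} (ht : 0 ≤ t) :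
    HasDerivAt (FF p ℓ) (MF p ℓ t) t := by
  have h1t : (1 + t) ≠ 0 := by positivity
  have hA := AF_pos (ℓ := ℓ) hp hp1 t
  have ha : ∀ y, HasDerivAt (fun s => aF p ℓ s y)
      (∑ x, p (x, y) * (Real.exp (t * ℓ (x, y)) * (1 * ℓ (x, y)))) t := fun y =>
    HasDerivAt.fun_sum fun x _ => (((hasDerivAt_id t).mul_const (ℓ (x, y))).exp).const_mul _
  set a' : Y → ℝ := fun y => (∑ x, p (x, y) * (Real.exp (t * ℓ (x, y)) * (1 * ℓ (x, y)))) with ha'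
  have h1 : HasDerivAt (fun s : ℝ => 1 + s) 1 t := (hasDerivAt_id t).const_add 1
  have hb : ∀ y ∈ suppY p, HasDerivAt (fun s => bF p ℓ s y)
      (bF p ℓ t y * ((a' y / aF p ℓ t y * (1 + t) - Real.log (aF p ℓ t y) * 1) / (1 + t) ^ 2)) t :=
    fun y hy => ((((ha y).log (aF_pos hp hy t).ne').div h1 h1t)).exp
  have hAd : HasDerivAt (AF p ℓ) (∑ y ∈ suppY p,
      (bF p ℓ t y * ((a' y / aF p ℓ t y * (1 + t) - Real.log (aF p ℓ t y) * 1) / (1 + t) ^ 2))) t :=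
    HasDerivAt.fun_sum hb
  have hF := h1.mul (hAd.log hA.ne')
  refine hF.congr_deriv ?_
  have hone : ∑ y ∈ suppY p, bF p ℓ t y / AF p ℓ t = 1 := by
    rw [← Finset.sum_div]; exact div_self hA.ne'
  have e0 : 1 * Real.log (AF p ℓ t) = ∑ y ∈ suppY p, Real.log (AF p ℓ t) * (bF p ℓ t y / AF p ℓ t) := by
    rw [← Finset.mul_sum, hone]; ring
  rw [MF, VF_sum hp, e0, Finset.sum_div, Finset.mul_sum, ← Finset.sum_add_distrib]
  refine Finset.sum_congr rfl fun y hy => ?_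
  have hay := aF_pos (ℓ := ℓ) hp hy t
  simp only [mul_sub]
  rw [Finset.sum_sub_distrib, ← Finset.sum_mul, log_q hp hp1 t hy, VF_marg hp t hy]
  have : ∑ x, VF p ℓ t (x, y) * ℓ (x, y) = a' y / aF p ℓ t y * (bF p ℓ t y / AF p ℓ t) := by
    rw [ha', Finset.sum_div, Finset.sum_mul]
    refine Finset.sum_congr rfl fun x _ => ?_
    simp only [VF]; ring
  rw [this]
  field_simp
  ring

lemma FF_lower (hp : ∀ z, 0 ≤ p z) (hp1 : ∑ z, p z = 1) (hℓ : ∀ z, 0 < p z → ℓ z ≤ 0)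
    (m : Y → X) (hm : ∀ y ∈ suppY p, 0 < p (m y, y)) :
    ∃ C : ℝ, ∀ t : ℝ, 0 ≤ t →
      C + (1 + t) * Real.log (∑ y ∈ suppY p, Real.exp (ℓ (m y, y))) ≤ FF p ℓ t := by
  obtain ⟨y0, hy0, hmin⟩ := Finset.exists_min_image (suppY p) (fun y => p (m y, y)) (suppY_nonempty hp hp1)
  set c := p (m y0, y0) with hc
  have hc0 : 0 < c := hm y0 hy0
  have hJ : 0 < ∑ y ∈ suppY p, Real.exp (ℓ (m y, y)) :=
    Finset.sum_pos (fun y _ => Real.exp_pos _) (suppY_nonempty hp hp1)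
  refine ⟨Real.log c, fun t ht => ?_⟩
  have h1t : 0 < 1 + t := by positivity
  have : Real.exp (Real.log c / (1 + t)) * ∑ y ∈ suppY p, Real.exp (ℓ (m y, y)) ≤ AF p ℓ t := by
    rw [Finset.mul_sum]
    refine Finset.sum_le_sum fun y hy => ?_
    rw [← Real.exp_add, bF, Real.exp_le_exp, le_div_iff₀ h1t]
    have h2 : c * Real.exp (t * ℓ (m y, y)) ≤ aF p ℓ t y := by
      refine le_trans (mul_le_mul_of_nonneg_right (hmin y hy) (Real.exp_pos _).le) ?_
      exact Finset.single_le_sum (f := fun x => p (x, y) * Real.exp (t * ℓ (x, y)))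
        (fun x _ => mul_nonneg (hp _) (Real.exp_pos _).le) (Finset.mem_univ (m y))
    have h3 := Real.log_le_log (by positivity) h2
    rw [Real.log_mul hc0.ne' (Real.exp_pos _).ne', Real.log_exp] at h3
    have h4 := hℓ _ (hm y hy)
    have : (Real.log c / (1 + t) + ℓ (m y, y)) * (1 + t) = Real.log c + ℓ (m y, y) + t * ℓ (m y, y) := by
      field_simp; ring
    linarith
  have h2 := Real.log_le_log (by positivity) this
  rw [Real.log_mul (Real.exp_pos _).ne' hJ.ne', Real.log_exp] at h2
  have h3 := mul_le_mul_of_nonneg_left h2 h1t.le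
  rw [FF]
  refine le_of_eq_of_le ?_ h3
  field_simp

lemma exists_opt (hp : ∀ z, 0 ≤ p z) (hp1 : ∑ z, p z = 1) {C J R η : ℝ}
    (hF : ∀ t : ℝ, 0 ≤ t → C + (1 + t) * J ≤ FF p ℓ t) (hR : R < J) (hη : 0 < η) :
    ∃ t : ℝ, 0 ≤ t ∧ R < MF p ℓ t ∧ DF p ℓ t ≤ t * R - FF p ℓ t + η := by
  set κ := (J - R) / 2 with hκ
  have hκ0 : 0 < κ := by rw [hκ]; linarith
  set T := max 0 ((- C - J) / κ) with hT
  have hT0 : 0 ≤ T := le_max_left _ _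
  obtain ⟨δ, hδ0, hδκ, hδT⟩ : ∃ δ : ℝ, 0 < δ ∧ δ ≤ κ ∧ T * δ ≤ η := by
    refine ⟨min κ (η / (T + 1)), lt_min hκ0 (by positivity), min_le_left _ _, ?_⟩
    calc T * min κ (η / (T + 1)) ≤ (T + 1) * (η / (T + 1)) := by
          gcongr
          · linarith
          · exact min_le_right _ _
      _ = η := by field_simp
  have hd : ∀ s, 0 ≤ s → HasDerivAt (fun s => s * (R + δ) - FF p ℓ s) (1 * (R + δ) - MF p ℓ s) s :=
    fun s hs => ((hasDerivAt_id s).mul_const (R + δ)).sub (hasDerivAt_FF hp hp1 hs)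
  have hcont : ContinuousOn (fun s => s * (R + δ) - FF p ℓ s) (Set.Icc 0 (T + 1)) :=
    fun s hs => (hd s hs.1).continuousAt.continuousWithinAt
  obtain ⟨t, ht, hmax⟩ := isCompact_Icc.exists_isMaxOn (Set.nonempty_Icc.2 (by linarith : (0:ℝ) ≤ T + 1)) hcont
  have hval0 : 0 ≤ t * (R + δ) - FF p ℓ t := by
    have := hmax (Set.left_mem_Icc.2 (by linarith : (0:ℝ) ≤ T + 1))
    simpa [FF_zero hp hp1] using this
  have htT : t ≤ T := by
    refine le_trans ?_ (le_max_right _ _)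
    rw [le_div_iff₀ hκ0]
    have h1 := hF t ht.1
    have h2 : t * δ ≤ t * κ := mul_le_mul_of_nonneg_left hδκ ht.1
    have h3 : t * J = t * R + 2 * (t * κ) := by rw [hκ]; ring
    nlinarith
  have hM1 : R + δ ≤ MF p ℓ t := by
    by_contra! h
    obtain ⟨s, hs1, hs2, hs3⟩ := exists_gt_of_deriv_pos (hd t ht.1) (by linarith) one_pos
    exact absurd (hmax (⟨by linarith [ht.1], by linarith⟩ : s ∈ Set.Icc 0 (T + 1))) (not_le.2 hs3)
  have hD : DF p ℓ t = t * (R + δ) - FF p ℓ t := by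
    rw [DF_eq hp hp1 ht.1]
    rcases ht.1.eq_or_lt with h0 | h0
    · rw [← h0]; simp
    · have hl : IsLocalMax (fun s => s * (R + δ) - FF p ℓ s) t :=
        hmax.isLocalMax (Icc_mem_nhds h0 (by linarith))
      have := hl.hasDerivAt_eq_zero (hd t ht.1)
      rw [show MF p ℓ t = R + δ by linarith]
  refine ⟨t, ht.1, by linarith, ?_⟩
  have : t * δ ≤ T * δ := mul_le_mul_of_nonneg_right htT hδ0.le
  rw [hD]; linarith

end tilt

end RSTaux
namespace RST

open RSTaux

section phi
variable {Y : Type*} [Fintype Y] [DecidableEq Y]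

lemma typeClassCard_pos {n : ℕ} (ys : Fin n → Y) : 0 < typeClassCard ys := by
  unfold typeClassCard
  exact Finset.card_pos.2 ⟨ys, by simp⟩

lemma numTypes_pos {n : ℕ} (ys : Fin n → Y) : 0 < numTypes Y n := by
  unfold numTypes
  exact Finset.card_pos.2 ⟨seqType ys, Finset.mem_image.2 ⟨ys, Finset.mem_univ _, rfl⟩⟩

lemma numTypes_le (n : ℕ) : numTypes Y n ≤ (n + 1) ^ Fintype.card Y := by
  unfold numTypes
  have hsub : (Finset.univ.image fun ys : Fin n → Y => seqType ys) ⊆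
      Fintype.piFinset fun _ : Y => Finset.range (n + 1) := by
    intro s hs
    obtain ⟨ys, -, rfl⟩ := Finset.mem_image.1 hs
    rw [Fintype.mem_piFinset]
    intro y
    rw [Finset.mem_range, Nat.lt_succ_iff]
    exact (Finset.card_le_univ _).trans (by simp)
  refine (Finset.card_le_card hsub).trans ?_
  simp [Fintype.card_piFinset]

lemma prod_eq_of_type {M : Type*} [CommMonoid M] {n : ℕ} (Q : Y → M) (zs : Fin n → Y) :
    ∏ i, Q (zs i) = ∏ y, Q y ^ seqType zs y := by
  rw [← Finset.prod_fiberwise Finset.univ zs]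
  refine Finset.prod_congr rfl fun y _ => ?_
  rw [seqType, ← Finset.prod_const]
  exact Finset.prod_congr rfl fun i hi => by rw [(Finset.mem_filter.1 hi).2]

lemma card_mul_prod_le {n : ℕ} (Q : Y → ℝ≥0∞) (hQ : IsDist Q) (ys : Fin n → Y) :
    (typeClassCard ys : ℝ≥0∞) * ∏ i, Q (ys i) ≤ 1 := by
  have h1 : ∑ zs ∈ (Finset.univ.filter fun zs : Fin n → Y => seqType zs = seqType ys), ∏ i, Q (zs i)
      = (typeClassCard ys : ℝ≥0∞) * ∏ i, Q (ys i) := by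
    rw [typeClassCard, ← nsmul_eq_mul, ← Finset.sum_const]
    refine Finset.sum_congr rfl fun zs hz => ?_
    rw [prod_eq_of_type, prod_eq_of_type Q ys, (Finset.mem_filter.1 hz).2]
  rw [← h1]
  calc _ ≤ ∑ zs : Fin n → Y, ∏ i, Q (zs i) := Finset.sum_le_sum_of_subset (Finset.subset_univ _)
    _ = 1 := by rw [sum_prod_single, hQ, one_pow]

lemma PhiY_ne_top {n : ℕ} (ys : Fin n → Y) : PhiY Y n ys ≠ ⊤ := by
  have h1 := typeClassCard_pos ys
  have h2 := numTypes_pos ys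
  simp [PhiY]; omega

lemma PhiY_ne_zero {n : ℕ} (ys : Fin n → Y) : PhiY Y n ys ≠ 0 := by
  simp [PhiY, ENNReal.mul_eq_top]

lemma prod_le_PhiY {n : ℕ} (Q : Y → ℝ≥0∞) (hQ : IsDist Q) (ys : Fin n → Y) :
    ∏ i, Q (ys i) ≤ ((n : ℝ≥0∞) + 1) ^ Fintype.card Y * PhiY Y n ys := by
  have h1 := typeClassCard_pos ys
  have h2 := numTypes_pos ys
  have hc0 : (typeClassCard ys : ℝ≥0∞) ≠ 0 := by exact_mod_cast h1.ne'
  have hn0 : (numTypes Y n : ℝ≥0∞) ≠ 0 := by exact_mod_cast h2.ne'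
  have h3 : (numTypes Y n : ℝ≥0∞) ≤ ((n : ℝ≥0∞) + 1) ^ Fintype.card Y := by
    exact_mod_cast numTypes_le (Y := Y) n
  calc ∏ i, Q (ys i) ≤ (typeClassCard ys : ℝ≥0∞)⁻¹ := by
        rw [ENNReal.le_inv_iff_mul_le, mul_comm]; exact card_mul_prod_le Q hQ ys
    _ = (numTypes Y n : ℝ≥0∞) * PhiY Y n ys := by
        rw [PhiY, ENNReal.mul_inv (Or.inl hn0) (Or.inl (ENNReal.natCast_ne_top _)), ← mul_assoc,
          ENNReal.mul_inv_cancel hn0 (ENNReal.natCast_ne_top _), one_mul]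
    _ ≤ _ := mul_le_mul_left h3 _

lemma PhiY_sum (n : ℕ) : ∑ ys, (PhiY Y n ys).toReal ≤ 1 := by
  have h := Finset.sum_fiberwise_of_maps_to (s := Finset.univ)
    (t := Finset.univ.image fun ys : Fin n → Y => seqType ys) (g := fun ys : Fin n → Y => seqType ys)
    (fun i _ => Finset.mem_image_of_mem _ (Finset.mem_univ i)) (fun ys => (PhiY Y n ys).toReal)
  rw [← h]
  have h2 : ∀ s ∈ (Finset.univ.image fun ys : Fin n → Y => seqType ys),
      ∑ ys ∈ Finset.univ.filter (fun ys : Fin n → Y => seqType ys = s), (PhiY Y n ys).toReal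
        = (numTypes Y n : ℝ)⁻¹ := by
    intro s hs
    obtain ⟨ys, -, rfl⟩ := Finset.mem_image.1 hs
    have hc : (typeClassCard ys : ℝ) ≠ 0 := by exact_mod_cast (typeClassCard_pos ys).ne'
    have h3 : ∀ zs ∈ Finset.univ.filter (fun zs : Fin n → Y => seqType zs = seqType ys),
        (PhiY Y n zs).toReal = (numTypes Y n : ℝ)⁻¹ * (typeClassCard ys : ℝ)⁻¹ := by
      intro zs hz
      have : typeClassCard zs = typeClassCard ys := by
        unfold typeClassCard; rw [(Finset.mem_filter.1 hz).2]
      simp [PhiY, this, mul_comm]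
    rw [Finset.sum_congr rfl h3, Finset.sum_const, nsmul_eq_mul]
    change (typeClassCard ys : ℝ) * _ = _
    field_simp
  rw [Finset.sum_congr rfl h2, Finset.sum_const, nsmul_eq_mul]
  change (numTypes Y n : ℝ) * _ ≤ _
  exact mul_inv_le_one

end phi

section main
variable {X Y : Type*} [Fintype X] [Fintype Y] [DecidableEq Y]

def evp (P : X × Y → ℝ≥0∞) (g : ℕ → ℝ) (r : ℝ) (n : ℕ) : ℝ≥0∞ :=
  (∑ p ∈ Finset.univ.filter
              (fun p : (Fin n → X) × (Fin n → Y) =>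
                ENNReal.ofReal (g n * (2 : ℝ) ^ ((n : ℝ) * r)) *
                    (prodDist n (margX P) p.1 * PhiY Y n p.2) ≤ prodJoint n P p),
            prodJoint n P p)

variable {P : X × Y → ℝ≥0∞}

lemma P_le_one (hP : IsDist P) (z) : P z ≤ 1 := by
  rw [← hP]; exact Finset.single_le_sum (f := P) (fun _ _ => bot_le) (Finset.mem_univ z)

lemma P_ne_top (hP : IsDist P) (z) : P z ≠ ⊤ := ((P_le_one hP z).trans_lt ENNReal.one_lt_top).ne

lemma margX_ne_top (hP : IsDist P) (x) : margX P x ≠ ⊤ :=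
  ENNReal.sum_ne_top.2 fun y _ => P_ne_top hP _

lemma le_margX (x : X) (y : Y) : P (x, y) ≤ margX P x :=
  Finset.single_le_sum (f := fun y => P (x, y)) (fun _ _ => bot_le) (Finset.mem_univ y)

lemma evp_le_one (hP : IsDist P) (g : ℕ → ℝ) (r : ℝ) (n : ℕ) : evp P g r n ≤ 1 := by
  calc evp P g r n ≤ ∑ p : (Fin n → X) × (Fin n → Y), prodJoint n P p :=
        Finset.sum_le_sum_of_subset (Finset.subset_univ _)
    _ = 1 := by
        have := sum_prod_pair n P
        rw [show ∑ z, P z = 1 from hP, one_pow] at this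
        exact this

lemma event_lt (hP : IsDist P) {g : ℕ → ℝ} (hg : ∀ n : ℕ, ((n : ℝ) + 1) ^ (Fintype.card Y) < g n)
    (r : ℝ) (n : ℕ) (w : (Fin n → X) × (Fin n → Y))
    (hw : ENNReal.ofReal (g n * (2 : ℝ) ^ ((n : ℝ) * r)) *
                    (prodDist n (margX P) w.1 * PhiY Y n w.2) ≤ prodJoint n P w)
    (hw0 : prodJoint n P w ≠ 0) (Q : Y → ℝ≥0∞) (hQ : IsDist Q) :
    ENNReal.ofReal ((2 : ℝ) ^ ((n : ℝ) * r)) * ∏ i, (margX P (w.1 i) * Q (w.2 i)) < prodJoint n P w := by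
  refine lt_of_lt_of_le ?_ hw
  have hX0 : prodDist n (margX P) w.1 ≠ 0 := by
    rw [prodDist, Finset.prod_ne_zero_iff]
    intro i hi h0
    have := le_margX (P := P) (w.1 i) (w.2 i)
    rw [h0] at this
    exact hw0 (Finset.prod_eq_zero hi (nonpos_iff_eq_zero.1 this))
  have hXt : prodDist n (margX P) w.1 ≠ ⊤ := ENNReal.prod_ne_top fun i _ => margX_ne_top hP _
  have h2 : (0:ℝ) < (2 : ℝ) ^ ((n : ℝ) * r) := by positivity
  rw [Finset.prod_mul_distrib]
  calc ENNReal.ofReal ((2 : ℝ) ^ ((n : ℝ) * r)) * ((∏ i, margX P (w.1 i)) * ∏ i, Q (w.2 i))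
      ≤ ENNReal.ofReal ((2 : ℝ) ^ ((n : ℝ) * r)) * (prodDist n (margX P) w.1 *
        (((n : ℝ≥0∞) + 1) ^ Fintype.card Y * PhiY Y n w.2)) := by
        gcongr
        · exact le_rfl
        · exact prod_le_PhiY Q hQ _
    _ = ENNReal.ofReal ((2 : ℝ) ^ ((n : ℝ) * r)) * ((n : ℝ≥0∞) + 1) ^ Fintype.card Y *
        (prodDist n (margX P) w.1 * PhiY Y n w.2) := by ring
    _ < _ := by
        refine ENNReal.mul_lt_mul_left (mul_ne_zero hX0 (PhiY_ne_zero _))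
          (ENNReal.mul_ne_top hXt (PhiY_ne_top _)) ?_
        have : ((n : ℝ≥0∞) + 1) ^ Fintype.card Y = ENNReal.ofReal (((n : ℝ) + 1) ^ Fintype.card Y) := by
          rw [ENNReal.ofReal_pow (by positivity), ENNReal.ofReal_add (by positivity) (by positivity)]
          simp
        rw [this, ← ENNReal.ofReal_mul h2.le, mul_comm]
        exact (ENNReal.ofReal_lt_ofReal_iff (mul_pos ((by positivity : (0:ℝ) < ((n : ℝ) + 1) ^ Fintype.card Y).trans (hg n)) h2)).2
          (mul_lt_mul_of_pos_right (hg n) h2)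

lemma evp_bound (hP : IsDist P) {g : ℕ → ℝ} (hg : ∀ n : ℕ, ((n : ℝ) + 1) ^ (Fintype.card Y) < g n)
    (r : ℝ) (n : ℕ) (Q : Y → ℝ≥0∞) (hQ : IsDist Q) {t : ℝ} (ht : 0 < t) :
    ENNReal.ofReal ((2 : ℝ) ^ ((n : ℝ) * r)) ^ t * evp P g r n ≤
      (∑ z : X × Y, P z ^ (1 + t) * (margX P z.1 * Q z.2) ^ (-t)) ^ n := by
  rw [← sum_prod_pair, evp, Finset.mul_sum]
  refine le_trans (Finset.sum_le_sum ?_) (Finset.sum_le_sum_of_subset (Finset.subset_univ _))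
  intro w hw
  have hw := (Finset.mem_filter.1 hw).2
  by_cases h0 : prodJoint n P w = 0
  · rw [h0]; simp
  have hA := (event_lt hP hg r n w hw h0 Q hQ).le
  have hQt : ∀ y, Q y ≠ ⊤ := fun y => P_ne_top (P := fun z : Unit × Y => Q z.2)
    (by unfold IsDist; rw [Fintype.sum_prod_type]; simpa [IsDist] using hQ) ((), y)
  have hBt : ∀ i, margX P (w.1 i) * Q (w.2 i) ≠ ⊤ := fun i =>
    ENNReal.mul_ne_top (margX_ne_top hP _) (hQt _)
  have hAt : prodJoint n P w ≠ ⊤ := ENNReal.prod_ne_top fun i _ => P_ne_top hP _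
  rw [Finset.prod_mul_distrib, ENNReal.prod_rpow_of_nonneg (by positivity),
    ENNReal.prod_rpow_of_ne_top (fun i _ => hBt i)]
  change _ ≤ prodJoint n P w ^ (1 + t) * _
  rw [ENNReal.rpow_add _ _ h0 hAt, ENNReal.rpow_one, mul_comm, mul_assoc]
  refine mul_le_mul_right ?_ _
  have hA' := ENNReal.rpow_le_rpow hA ht.le
  rw [ENNReal.mul_rpow_of_nonneg _ _ ht.le] at hA'
  rw [ENNReal.rpow_neg, ← div_eq_mul_inv]
  rw [ENNReal.le_div_iff_mul_le]
  · exact hA'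
  · right
    simp [h0, ht.le, hAt]
  · left
    exact ENNReal.rpow_ne_top_of_nonneg ht.le (ENNReal.prod_ne_top fun i _ => hBt i)

lemma elog2_mono {a b : ℝ≥0∞} (h : a ≤ b) : elog2 a ≤ elog2 b := by
  unfold elog2
  by_cases h1 : a = 0
  · simp [h1]
  have h2 : b ≠ 0 := fun hb => h1 (nonpos_iff_eq_zero.1 (hb ▸ h))
  by_cases h3 : b = ⊤
  · simp [h3]
  have h4 : a ≠ ⊤ := fun ha => h3 (top_le_iff.1 (ha ▸ h))
  rw [if_neg h1, if_neg h2, if_neg h3, if_neg h4, EReal.coe_le_coe_iff]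
  exact Real.logb_le_logb_of_le (by norm_num) (ENNReal.toReal_pos h1 h4) (ENNReal.toReal_mono h3 h)

lemma elog2_ofReal {x : ℝ} (hx : 0 < x) : elog2 (ENNReal.ofReal x) = (Real.logb 2 x : ℝ) := by
  have : ENNReal.ofReal x ≠ 0 := by simpa using hx
  rw [elog2, if_neg this, if_neg ENNReal.ofReal_ne_top, ENNReal.toReal_ofReal hx.le]

lemma sup_le (hP : IsDist P) {g : ℕ → ℝ} (hg : ∀ n : ℕ, ((n : ℝ) + 1) ^ (Fintype.card Y) < g n)
    (r : ℝ) {n : ℕ} (hn : 0 < n) :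
    (⨆ t : {t : ℝ // 0 ≤ t},
          ((t.1 : ℝ) : EReal) * ((r : EReal) - renyiMI (ENNReal.ofReal (1 + t.1)) P)) ≤
    (((-1 : ℝ) / n : ℝ) : EReal) * elog2 (evp P g r n) := by
  have hn' : (0:ℝ) < n := by exact_mod_cast hn
  have hneg : (-1 : ℝ) / n < 0 := div_neg_of_neg_of_pos (by norm_num) hn'
  by_cases h0 : evp P g r n = 0
  · rw [h0]; simp only [elog2, if_true]
    rw [EReal.coe_mul_bot_of_neg hneg]; exact le_top
  have hle := evp_le_one hP g r n
  have ht : evp P g r n ≠ ⊤ := (hle.trans_lt ENNReal.one_lt_top).ne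
  set e := (evp P g r n).toReal with he
  have he0 : 0 < e := ENNReal.toReal_pos h0 ht
  have he1 : e ≤ 1 := by simpa using ENNReal.toReal_mono ENNReal.one_ne_top hle
  have hev : evp P g r n = ENNReal.ofReal e := (ENNReal.ofReal_toReal ht).symm
  rw [hev, elog2_ofReal he0, ← EReal.coe_mul]
  refine iSup_le fun ⟨t, ht0⟩ => ?_
  dsimp only
  rcases ht0.eq_or_lt with rfl | htp
  · simp only [EReal.coe_zero, zero_mul]
    exact_mod_cast mul_nonneg_of_nonpos_of_nonpos hneg.le (Real.logb_nonpos (by norm_num) he0.le he1)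
  have key : ((r - (-1) / n * Real.logb 2 e / t : ℝ) : EReal) ≤ renyiMI (ENNReal.ofReal (1 + t)) P := by
    refine le_iInf fun ⟨Q, hQ⟩ => ?_
    have hb := evp_bound hP hg r n Q hQ htp
    dsimp only
    set s := (∑ z : X × Y, P z ^ (1 + t) * (margX P z.1 * Q z.2) ^ (-t)) with hs
    have a0 : ENNReal.ofReal (1 + t) ≠ 0 := by simp; linarith
    have a1 : ENNReal.ofReal (1 + t) ≠ 1 := by
      rw [Ne, ENNReal.ofReal_eq_one]; linarith
    have ar : (ENNReal.ofReal (1 + t)).toReal = 1 + t := ENNReal.toReal_ofReal (by linarith)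
    rw [renyiD, if_neg a0, if_neg a1, if_neg ENNReal.ofReal_ne_top, ar,
      show (1 - (1 + t)) = -t by ring, show (1 + t - 1) = t by ring, ← hs]
    by_cases hst : s = ⊤
    · rw [hst]; simp only [elog2, ENNReal.top_ne_zero, if_true, if_false]
      rw [EReal.coe_mul_top_of_pos (inv_pos.2 htp)]; exact le_top
    have h2 : (0:ℝ) < (2 : ℝ) ^ ((n : ℝ) * r) := by positivity
    rw [hev, ENNReal.ofReal_rpow_of_pos h2, ← ENNReal.ofReal_mul (by positivity)] at hb
    have hs0 : s ≠ 0 := by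
      intro h; rw [h, zero_pow hn.ne'] at hb
      have : 0 < ((2 : ℝ) ^ ((n : ℝ) * r)) ^ t * e := by positivity
      simp at hb; linarith
    have hsr : 0 < s.toReal := ENNReal.toReal_pos hs0 hst
    rw [← ENNReal.ofReal_toReal hst, ← ENNReal.ofReal_pow hsr.le,
      ENNReal.ofReal_le_ofReal_iff (by positivity)] at hb
    have hl := Real.logb_le_logb_of_le (b := 2) (by norm_num) (by positivity) hb
    rw [Real.logb_mul (by positivity) (by positivity), Real.logb_pow, ← Real.rpow_mul (by norm_num),
      Real.logb_rpow (by norm_num) (by norm_num)] at hl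
    rw [← ENNReal.ofReal_toReal hst, elog2_ofReal hsr, ← EReal.coe_mul]
    rw [EReal.coe_le_coe_iff]
    have : t⁻¹ * Real.logb 2 s.toReal - (r - -1 / n * Real.logb 2 e / t)
      = (n * Real.logb 2 s.toReal - (n * r * t + Real.logb 2 e)) / (n * t) := by
      field_simp; ring
    have h3 : 0 ≤ (n * Real.logb 2 s.toReal - (n * r * t + Real.logb 2 e)) / (n * t) :=
      div_nonneg (by linarith) (by positivity)
    linarith
  calc (t : EReal) * ((r : EReal) - renyiMI (ENNReal.ofReal (1 + t)) P)
      ≤ (t : EReal) * ((r : EReal) - ((r - (-1) / n * Real.logb 2 e / t : ℝ) : EReal)) :=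
        mul_le_mul_of_nonneg_left (EReal.sub_le_sub le_rfl key) (by exact_mod_cast htp.le)
    _ = _ := by
        rw [← EReal.coe_sub, ← EReal.coe_mul]
        congr 1
        field_simp; ring

/-- real version of the distribution -/
def pr (P : X × Y → ℝ≥0∞) (z : X × Y) : ℝ := (P z).toReal

def pXr (P : X × Y → ℝ≥0∞) (x : X) : ℝ := (margX P x).toReal

def lr (P : X × Y → ℝ≥0∞) (z : X × Y) : ℝ := Real.log (pr P z / pXr P z.1)

lemma pr_nonneg (z) : 0 ≤ pr P z := ENNReal.toReal_nonneg

lemma pr_sum (hP : IsDist P) : ∑ z, pr P z = 1 := by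
  unfold pr
  rw [← ENNReal.toReal_sum fun z _ => P_ne_top hP z, show ∑ z, P z = 1 from hP, ENNReal.toReal_one]

lemma ofReal_pr (hP : IsDist P) (z) : ENNReal.ofReal (pr P z) = P z :=
  ENNReal.ofReal_toReal (P_ne_top hP z)

lemma ofReal_pXr (hP : IsDist P) (x) : ENNReal.ofReal (pXr P x) = margX P x :=
  ENNReal.ofReal_toReal (margX_ne_top hP x)

lemma pr_le_pXr (hP : IsDist P) (z : X × Y) : pr P z ≤ pXr P z.1 :=
  ENNReal.toReal_mono (margX_ne_top hP _) (le_margX z.1 z.2)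

lemma pXr_pos (hP : IsDist P) {z : X × Y} (h : 0 < pr P z) : 0 < pXr P z.1 :=
  h.trans_le (pr_le_pXr hP z)

lemma exp_lr (hP : IsDist P) {z : X × Y} (h : 0 < pr P z) :
    pXr P z.1 * Real.exp (lr P z) = pr P z := by
  have := pXr_pos hP h
  rw [lr, Real.exp_log (by positivity)]
  field_simp

lemma lr_nonpos (hP : IsDist P) {z : X × Y} (h : 0 < pr P z) : lr P z ≤ 0 := by
  have := pXr_pos hP h
  exact Real.log_nonpos (by positivity) ((div_le_one this).2 (pr_le_pXr hP z))

/-- a choice of maximiser -/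
lemma exists_m (hP : IsDist P) : ∃ m : Y → X, (∀ y ∈ suppY (pr P), 0 < pr P (m y, y)) ∧
    ∀ x y, 0 < pr P (x, y) → lr P (x, y) ≤ lr P (m y, y) := by
  have : ∀ y, ∃ m : X, (y ∈ suppY (pr P) → 0 < pr P (m, y)) ∧
      ∀ x, 0 < pr P (x, y) → lr P (x, y) ≤ lr P (m, y) := by
    intro y
    by_cases hy : y ∈ suppY (pr P)
    · obtain ⟨x, hx⟩ := exists_of_mem_suppY hy
      obtain ⟨m, hm, hmax⟩ := Finset.exists_max_image (Finset.univ.filter fun x => 0 < pr P (x, y))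
        (fun x => lr P (x, y)) ⟨x, by simpa using hx⟩
      exact ⟨m, fun _ => by simpa using hm, fun x hx => hmax x (by simpa using hx)⟩
    · have : Nonempty X := by
        by_contra h
        rw [not_nonempty_iff] at h
        have := pr_sum hP
        simp at this
      exact ⟨Classical.arbitrary X, fun h => absurd h hy, fun x hx =>
        absurd (mem_suppY pr_nonneg hx) hy⟩
  choose m hm using this
  exact ⟨m, fun y => (hm y).1, fun x y => (hm y).2 x⟩

/-- normalised distribution on the support -/
lemma isDist_norm {S : Finset Y} {f : Y → ℝ} (hf : ∀ y, 0 < f y) (hS : S.Nonempty) :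
    IsDist (fun y => if y ∈ S then ENNReal.ofReal (f y / ∑ y ∈ S, f y) else 0) := by
  have hpos : 0 < ∑ y ∈ S, f y := Finset.sum_pos (fun y _ => hf y) hS
  unfold IsDist
  rw [← Finset.sum_filter, Finset.filter_univ_mem, ← ENNReal.ofReal_sum_of_nonneg
    (fun y _ => (div_pos (hf y) hpos).le), ← Finset.sum_div, div_self hpos.ne', ENNReal.ofReal_one]

def cS (P : X × Y → ℝ≥0∞) (m : Y → X) : ℝ := ∑ y ∈ suppY (pr P), Real.exp (lr P (m y, y))

lemma cS_pos (hP : IsDist P) (m : Y → X) : 0 < cS P m :=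
  Finset.sum_pos (fun y _ => Real.exp_pos _) (suppY_nonempty pr_nonneg (pr_sum hP))

/-- the optimal `Q` for order infinity -/
lemma exists_Q_top (hP : IsDist P) {m : Y → X}
    (hm : ∀ x y, 0 < pr P (x, y) → lr P (x, y) ≤ lr P (m y, y)) :
    ∃ Q : Y → ℝ≥0∞, IsDist Q ∧ ∀ z, P z ≤ ENNReal.ofReal (cS P m) * (margX P z.1 * Q z.2) := by
  refine ⟨_, isDist_norm (S := suppY (pr P)) (f := fun y => Real.exp (lr P (m y, y)))
    (fun y => Real.exp_pos _) (suppY_nonempty pr_nonneg (pr_sum hP)), ?_⟩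
  rintro ⟨x, y⟩
  rcases (pr_nonneg (P := P) (x, y)).eq_or_lt with h0 | h0
  · rw [← ofReal_pr hP, ← h0]; simp
  have hc := cS_pos hP m
  have hy := mem_suppY pr_nonneg h0
  have hX := pXr_pos hP h0
  dsimp only at hX ⊢
  rw [if_pos hy, ← ofReal_pr hP, ← ofReal_pXr hP, ← ENNReal.ofReal_mul hX.le, ← ENNReal.ofReal_mul hc.le]
  apply ENNReal.ofReal_le_ofReal
  rw [← exp_lr hP h0]
  change _ ≤ cS P m * (pXr P x * (Real.exp (lr P (m y, y)) / cS P m))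
  have := Real.exp_le_exp.2 (hm x y h0)
  calc _ ≤ pXr P x * Real.exp (lr P (m y, y)) := mul_le_mul_of_nonneg_left this hX.le
    _ = _ := by field_simp

lemma renyiMI_top_le (hP : IsDist P) {m : Y → X}
    (hm : ∀ x y, 0 < pr P (x, y) → lr P (x, y) ≤ lr P (m y, y)) :
    renyiMI ⊤ P ≤ (Real.logb 2 (cS P m) : ℝ) := by
  obtain ⟨Q, hQ, h⟩ := exists_Q_top hP hm
  refine (iInf_le _ ⟨Q, hQ⟩).trans ?_
  rw [renyiD, if_neg ENNReal.top_ne_zero, if_neg ENNReal.top_ne_one, if_pos rfl,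
    ← elog2_ofReal (cS_pos hP m)]
  exact elog2_mono (iSup_le fun z => ENNReal.div_le_of_le_mul (h z))

lemma le_renyiMI_top (hP : IsDist P) {m : Y → X} (hm : ∀ y ∈ suppY (pr P), 0 < pr P (m y, y)) :
    (Real.logb 2 (cS P m) : ℝ) ≤ renyiMI ⊤ P := by
  refine le_iInf fun ⟨Q, hQ⟩ => ?_
  rw [renyiD, if_neg ENNReal.top_ne_zero, if_neg ENNReal.top_ne_one, if_pos rfl,
    ← elog2_ofReal (cS_pos hP m)]
  apply elog2_mono
  dsimp only
  set s := ⨆ z : X × Y, P z / (margX P z.1 * Q z.2) with hs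
  have hs0 : ∀ z, P z / (margX P z.1 * Q z.2) ≤ s := le_iSup (fun z : X × Y => P z / (margX P z.1 * Q z.2))
  have hQt : ∀ y, Q y ≠ ⊤ := fun y => P_ne_top (P := fun z : Unit × Y => Q z.2)
    (by unfold IsDist; rw [Fintype.sum_prod_type]; simpa [IsDist] using hQ) ((), y)
  by_cases hst : s = ⊤
  · rw [hst]; exact le_top
  rw [cS, ENNReal.ofReal_sum_of_nonneg fun y _ => (Real.exp_pos _).le]
  calc _ ≤ ∑ y ∈ suppY (pr P), s * Q y := by
        refine Finset.sum_le_sum fun y hy => ?_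
        have hp := hm y hy
        have hX := pXr_pos hP hp
        have h1 := hs0 (m y, y)
        have hPz : P (m y, y) ≠ 0 := by
          intro h; rw [pr, h] at hp; simp at hp
        dsimp only at h1 hX
        rw [ENNReal.div_le_iff_le_mul (Or.inr hst) (Or.inl (ENNReal.mul_ne_top (margX_ne_top hP _) (hQt _)))] at h1
        rw [← ofReal_pr hP, ← ofReal_pXr hP, ← exp_lr hP hp, ENNReal.ofReal_mul hX.le] at h1
        have hX0 : ENNReal.ofReal (pXr P (m y)) ≠ 0 := by simpa using hX
        refine (ENNReal.mul_le_mul_iff_right hX0 ENNReal.ofReal_ne_top).1 (h1.trans_eq ?_)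
        ring
    _ ≤ ∑ y, s * Q y := Finset.sum_le_sum_of_subset (Finset.subset_univ _)
    _ = s := by rw [← Finset.mul_sum, show ∑ y, Q y = 1 from hQ, mul_one]

lemma evp_zero (hP : IsDist P) {g : ℕ → ℝ} (hg : ∀ n : ℕ, ((n : ℝ) + 1) ^ (Fintype.card Y) < g n)
    {r : ℝ} (hr : renyiMI ⊤ P ≤ (r : EReal)) (n : ℕ) : evp P g r n = 0 := by
  obtain ⟨m, hm1, hm2⟩ := exists_m hP
  have h1 : Real.logb 2 (cS P m) ≤ r := by
    exact_mod_cast (le_renyiMI_top hP hm1).trans hr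
  have h2 : cS P m ≤ 2 ^ r := (Real.logb_le_iff_le_rpow (by norm_num) (cS_pos hP m)).1 h1
  obtain ⟨Q, hQ, h⟩ := exists_Q_top hP hm2
  refine Finset.sum_eq_zero fun w hw => ?_
  by_contra h0
  refine absurd (event_lt hP hg r n w (Finset.mem_filter.1 hw).2 h0 Q hQ) (not_lt.2 ?_)
  calc prodJoint n P w ≤ ∏ i : Fin n, (ENNReal.ofReal (2 ^ r) * (margX P (w.1 i) * Q (w.2 i))) :=
        Finset.prod_le_prod' fun i _ => (h _).trans (mul_le_mul_left (ENNReal.ofReal_le_ofReal h2) _)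
    _ = _ := by
        rw [Finset.prod_mul_distrib, Finset.prod_const, Finset.card_univ, Fintype.card_fin,
          ← ENNReal.ofReal_pow (by positivity), ← Real.rpow_mul_natCast (by norm_num), mul_comm r]

lemma renyiMI_le (hP : IsDist P) {t : ℝ} (ht : 0 < t) :
    renyiMI (ENNReal.ofReal (1 + t)) P ≤ ((t⁻¹ * (FF (pr P) (lr P) t / Real.log 2) : ℝ) : EReal) := by
  set p := pr P with hp
  set ℓ := lr P with hℓ
  have hp0 : ∀ z, 0 ≤ p z := pr_nonneg
  have hp1 : ∑ z, p z = 1 := pr_sum hP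
  have hA := AF_pos (ℓ := ℓ) hp0 hp1 t
  have hQ := isDist_norm (S := suppY p) (f := bF p ℓ t) (fun y => bF_pos t y) (suppY_nonempty hp0 hp1)
  refine (iInf_le _ ⟨_, hQ⟩).trans ?_
  dsimp only
  have a0 : ENNReal.ofReal (1 + t) ≠ 0 := by simp; linarith
  have a1 : ENNReal.ofReal (1 + t) ≠ 1 := by
    rw [Ne, ENNReal.ofReal_eq_one]; linarith
  have ar : (ENNReal.ofReal (1 + t)).toReal = 1 + t := ENNReal.toReal_ofReal (by linarith)
  rw [renyiD, if_neg a0, if_neg a1, if_neg ENNReal.ofReal_ne_top, ar,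
      show (1 - (1 + t)) = -t by ring, show (1 + t - 1) = t by ring]
  have e1 : FF p ℓ t / Real.log 2 = Real.logb 2 (Real.exp (FF p ℓ t)) := by
    rw [Real.logb, Real.log_exp]
  rw [e1, EReal.coe_mul, ← elog2_ofReal (Real.exp_pos _)]
  refine mul_le_mul_of_nonneg_left (elog2_mono ?_) (by exact_mod_cast (inv_pos.2 ht).le)
  have hterm : ∀ z : X × Y, P z ^ (1 + t) * (margX P z.1 * (if z.2 ∈ suppY p then
      ENNReal.ofReal (bF p ℓ t z.2 / ∑ y ∈ suppY p, bF p ℓ t y) else 0)) ^ (-t) =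
      ENNReal.ofReal (p z * Real.exp (t * ℓ z) * (bF p ℓ t z.2 / AF p ℓ t) ^ (-t)) := by
    rintro ⟨x, y⟩
    rcases (hp0 (x, y)).eq_or_lt with h0 | h0
    · rw [← ofReal_pr hP, ← hp, ← h0]
      simp [ENNReal.zero_rpow_of_pos (by linarith : 0 < 1 + t)]
    have hy := mem_suppY hp0 h0
    have hX := pXr_pos hP h0
    have hb := bF_pos (p := p) (ℓ := ℓ) t y
    dsimp only at hX ⊢
    rw [if_pos hy]
    change _ * (_ * ENNReal.ofReal (bF p ℓ t y / AF p ℓ t)) ^ (-t) = _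
    have hq : 0 < bF p ℓ t y / AF p ℓ t := by positivity
    rw [← ofReal_pr hP, ← ofReal_pXr hP, ← hp, ← ENNReal.ofReal_mul hX.le,
      ENNReal.ofReal_rpow_of_pos h0, ENNReal.ofReal_rpow_of_pos (by positivity),
      ← ENNReal.ofReal_mul (by positivity)]
    congr 1
    rw [Real.mul_rpow hX.le hq.le, Real.rpow_add h0, Real.rpow_one, ← mul_assoc]
    congr 1
    rw [mul_assoc]
    congr 1
    rw [hℓ, lr, mul_comm t, ← Real.rpow_def_of_pos (div_pos h0 hX), Real.div_rpow h0.le hX.le,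
      Real.rpow_neg hX.le, div_eq_mul_inv]
  rw [Finset.sum_congr rfl fun z _ => hterm z, ← ENNReal.ofReal_sum_of_nonneg]
  · apply ENNReal.ofReal_le_ofReal
    rw [Fintype.sum_prod_type_right]
    refine le_of_eq ?_
    calc ∑ y, ∑ x, p (x, y) * Real.exp (t * ℓ (x, y)) * (bF p ℓ t y / AF p ℓ t) ^ (-t)
        = ∑ y ∈ suppY p, bF p ℓ t y * AF p ℓ t ^ t := by
          rw [← Finset.sum_subset (Finset.subset_univ (suppY p))]
          · refine Finset.sum_congr rfl fun y hy => ?_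
            have hb := bF_pos (p := p) (ℓ := ℓ) t y
            rw [← Finset.sum_mul]
            change aF p ℓ t y * _ = _
            have ha := aF_pos (ℓ := ℓ) hp0 hy t
            have hab : aF p ℓ t y = bF p ℓ t y ^ (1 + t) := by
              rw [Real.rpow_def_of_pos hb, bF, Real.log_exp, div_mul_cancel₀ _ (by positivity),
                Real.exp_log ha]
            rw [hab, Real.div_rpow hb.le hA.le, Real.rpow_neg hb.le, Real.rpow_neg hA.le,
              Real.rpow_add hb, Real.rpow_one]
            have := Real.rpow_pos_of_pos hb t
            have := Real.rpow_pos_of_pos hA t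
            field_simp
          · intro y _ hy
            exact Finset.sum_eq_zero fun x _ => by rw [p_zero_of_not_mem hp0 hy x]; simp
      _ = AF p ℓ t ^ (1 + t) := by
          rw [← Finset.sum_mul, Real.rpow_add hA, Real.rpow_one]; rfl
      _ = _ := by rw [Real.rpow_def_of_pos hA, FF, mul_comm]
  · intro z _
    have := hp0 z
    have hb := bF_pos (p := p) (ℓ := ℓ) t z.2
    positivity

lemma evp_lower (hP : IsDist P) {g : ℕ → ℝ} (hg : ∀ n, 0 < g n) (r : ℝ) (n : ℕ) :
    ENNReal.ofReal (∑ w : (Fin n → X) × (Fin n → Y),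
        if (∀ i, 0 < pr P (w.1 i, w.2 i)) ∧
          g n * Real.exp (n * (r * Real.log 2)) * (PhiY Y n w.2).toReal ≤ Real.exp (∑ i, lr P (w.1 i, w.2 i))
        then ∏ i, pr P (w.1 i, w.2 i) else 0) ≤ evp P g r n := by
  rw [← Finset.sum_filter, ENNReal.ofReal_sum_of_nonneg
    fun w _ => Finset.prod_nonneg fun i _ => pr_nonneg _]
  have e : ∀ w : (Fin n → X) × (Fin n → Y),
      ENNReal.ofReal (∏ i, pr P (w.1 i, w.2 i)) = prodJoint n P w := fun w => by
    rw [ENNReal.ofReal_prod_of_nonneg fun i _ => pr_nonneg _]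
    exact Finset.prod_congr rfl fun i _ => ofReal_pr hP _
  simp only [e]
  refine Finset.sum_le_sum_of_subset fun w hw => ?_
  obtain ⟨hpos, hw⟩ := (Finset.mem_filter.1 hw).2
  refine Finset.mem_filter.2 ⟨Finset.mem_univ _, ?_⟩
  have hXn : ∀ x, 0 ≤ pXr P x := fun x => ENNReal.toReal_nonneg
  have hX : prodDist n (margX P) w.1 = ENNReal.ofReal (∏ i, pXr P (w.1 i)) := by
    rw [ENNReal.ofReal_prod_of_nonneg fun i _ => hXn _]
    exact Finset.prod_congr rfl fun i _ => (ofReal_pXr hP _).symm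
  have hX0 : 0 ≤ ∏ i, pXr P (w.1 i) := Finset.prod_nonneg fun i _ => ENNReal.toReal_nonneg
  have h2 : (2 : ℝ) ^ ((n : ℝ) * r) = Real.exp (n * (r * Real.log 2)) := by
    rw [Real.rpow_def_of_pos (by norm_num)]; congr 1; ring
  have hg' := hg n
  rw [← e, hX, ← ENNReal.ofReal_toReal (PhiY_ne_top w.2), ← ENNReal.ofReal_mul hX0,
    ← ENNReal.ofReal_mul (by positivity), h2]
  apply ENNReal.ofReal_le_ofReal
  have : ∏ i, pr P (w.1 i, w.2 i) = (∏ i, pXr P (w.1 i)) * Real.exp (∑ i, lr P (w.1 i, w.2 i)) := by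
    rw [Real.exp_sum, ← Finset.prod_mul_distrib]
    exact Finset.prod_congr rfl fun i _ => (exp_lr hP (hpos i)).symm
  rw [this]
  calc _ = (∏ i, pXr P (w.1 i)) * (g n * Real.exp (n * (r * Real.log 2)) * (PhiY Y n w.2).toReal) := by ring
    _ ≤ _ := mul_le_mul_of_nonneg_left hw hX0

lemma upper_part (hP : IsDist P) {g : ℕ → ℝ} (hg : ∀ n, 0 < g n)
    (hg0 : Tendsto (fun n : ℕ => Real.logb 2 (g n) / n) atTop (nhds 0))
    {r : ℝ} (hr : (r : EReal) < renyiMI ⊤ P) {η : ℝ} (hη : 0 < η) :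
    ∃ u : ℝ, (u : EReal) ≤ (⨆ t : {t : ℝ // 0 ≤ t},
          ((t.1 : ℝ) : EReal) * ((r : EReal) - renyiMI (ENNReal.ofReal (1 + t.1)) P)) ∧
      ∀ᶠ n : ℕ in atTop, (((-1 : ℝ) / n : ℝ) : EReal) * elog2 (evp P g r n) ≤ ((u + η : ℝ) : EReal) := by
  have hl2 : 0 < Real.log 2 := Real.log_pos (by norm_num)
  have hp0 : ∀ z, 0 ≤ pr P z := pr_nonneg
  have hp1 := pr_sum hP
  obtain ⟨m, hm1, hm2⟩ := exists_m hP
  obtain ⟨C, hC⟩ := FF_lower hp0 hp1 (fun z hz => lr_nonpos hP hz) m hm1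
  have hR : r * Real.log 2 < Real.log (cS P m) := by
    have h1 : r < Real.logb 2 (cS P m) := by exact_mod_cast hr.trans_le (renyiMI_top_le hP hm2)
    rwa [Real.logb, lt_div_iff₀ hl2] at h1
  have hη' : 0 < η * Real.log 2 / 3 := by positivity
  obtain ⟨t, ht, hM, hD⟩ := exists_opt hp0 hp1 hC hR hη'
  have hg0' : Tendsto (fun n : ℕ => Real.log (g n) / n) atTop (nhds 0) := by
    have := hg0.mul_const (Real.log 2)
    rw [zero_mul] at this
    refine this.congr fun n => ?_
    rw [Real.logb]; field_simp
  have hcm := change_measure (pr P) (VF (pr P) (lr P) t) (lr P) hp0 (VF_nonneg hp0 hp1 t)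
    (VF_sum_one hp0 hp1 t) (fun z => VF_pos_imp hp0) _ _ rfl rfl
    (fun n y => (PhiY Y n y).toReal) (fun n y => ENNReal.toReal_nonneg) PhiY_sum g hg hg0'
    (r * Real.log 2) (η * Real.log 2 / 3) hM hη'
  change ∀ᶠ n : ℕ in atTop, 1 / 2 * Real.exp (-(n * (DF (pr P) (lr P) t + η * Real.log 2 / 3))) ≤ _ at hcm
  refine ⟨t * r - FF (pr P) (lr P) t / Real.log 2, ?_, ?_⟩
  · refine le_trans ?_ (le_iSup _ (⟨t, ht⟩ : {t : ℝ // 0 ≤ t}))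
    dsimp only
    rcases ht.eq_or_lt with h0 | h0
    · rw [← h0, FF_zero hp0 hp1]; simp
    · calc ((t * r - FF (pr P) (lr P) t / Real.log 2 : ℝ) : EReal)
          = (t : EReal) * ((r : EReal) - ((t⁻¹ * (FF (pr P) (lr P) t / Real.log 2) : ℝ) : EReal)) := by
            rw [← EReal.coe_sub, ← EReal.coe_mul]
            congr 1
            field_simp
        _ ≤ _ := mul_le_mul_of_nonneg_left (EReal.sub_le_sub le_rfl (renyiMI_le hP h0))
            (by exact_mod_cast ht)
  · obtain ⟨N, hN⟩ := exists_nat_gt (3 / η)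
    filter_upwards [hcm, eventually_gt_atTop 0, eventually_ge_atTop N] with n hn hn0 hnN
    have hn' : (0:ℝ) < n := by exact_mod_cast hn0
    have hneg : (-1 : ℝ) / n < 0 := div_neg_of_neg_of_pos (by norm_num) hn'
    have h1 := (ENNReal.ofReal_le_ofReal hn).trans (evp_lower hP hg r n)
    have h2 := elog2_mono h1
    rw [elog2_ofReal (by positivity), Real.logb_mul (by norm_num) (Real.exp_pos _).ne'] at h2
    rw [mul_comm]
    refine (EReal.mul_le_mul_of_nonpos_right h2 (by exact_mod_cast hneg.le)).trans ?_
    rw [← EReal.coe_mul, EReal.coe_le_coe_iff]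
    have e1 : Real.logb 2 (1 / 2) = -1 := by
      rw [one_div, Real.logb_inv, Real.logb_self_eq_one (by norm_num)]
    rw [e1, Real.logb, Real.log_exp]
    set D := DF (pr P) (lr P) t
    set F := FF (pr P) (lr P) t
    have e2 : (-1 + -(n * (D + η * Real.log 2 / 3)) / Real.log 2) * (-1 / n)
        = 1 / n + (D / Real.log 2 + η / 3) := by
      field_simp; ring
    rw [e2]
    have e3 : 1 / (n:ℝ) ≤ η / 3 := by
      have : 3 / η < n := hN.trans_le (by exact_mod_cast hnN)
      rw [div_lt_iff₀ hη] at this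
      rw [div_le_div_iff₀ hn' (by norm_num)]
      linarith
    have e4 : D / Real.log 2 ≤ t * r - F / Real.log 2 + η / 3 := by
      rw [div_le_iff₀ hl2]
      have : (t * r - F / Real.log 2 + η / 3) * Real.log 2
        = t * (r * Real.log 2) - F + η * Real.log 2 / 3 := by field_simp
      rw [this]; exact hD
    linarith

end main

end RST
namespace RST

/-- **Proposition 9 (exponent of a large-deviation probability).**
Let `P_{XY}` be a joint distribution, `Φ_{Y^n}` the uniform mixture over type classes,
and `g` a sub-exponential function with `g(n) > (n+1)^{|Y|}`.  For
`p_n := P_{XY}^{×n}(P_{XY}^{×n} ≥ g(n) 2^{nr} P_X^{×n} × Φ_{Y^n})` one has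
`lim_n (-1/n) log₂ p_n = sup_{t ≥ 0} t (r - I_{1+t}(X:Y))`, the limit being `∞`
when `r ≥ I_∞(X:Y)`. -/
theorem exponent_u_symm
    {X Y : Type*} [Fintype X] [Fintype Y] [DecidableEq Y]
    (P : X × Y → ℝ≥0∞) (hP : IsDist P)
    (g : ℕ → ℝ)
    (hg_subexp : Filter.Tendsto (fun n : ℕ => Real.logb 2 (g n) / n) Filter.atTop (nhds 0))
    (hg_big : ∀ n : ℕ, ((n : ℝ) + 1) ^ (Fintype.card Y) < g n)
    (r : ℝ) :
    ((r : EReal) < renyiMI ⊤ P →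
      Filter.Tendsto
        (fun n : ℕ => (((-1 : ℝ) / n : ℝ) : EReal) * elog2
          (∑ p ∈ Finset.univ.filter
              (fun p : (Fin n → X) × (Fin n → Y) =>
                ENNReal.ofReal (g n * (2 : ℝ) ^ ((n : ℝ) * r)) *
                    (prodDist n (margX P) p.1 * PhiY Y n p.2) ≤ prodJoint n P p),
            prodJoint n P p))
        Filter.atTop
        (nhds (⨆ t : {t : ℝ // 0 ≤ t},
          ((t.1 : ℝ) : EReal) * ((r : EReal) - renyiMI (ENNReal.ofReal (1 + t.1)) P)))) ∧
    (renyiMI ⊤ P ≤ (r : EReal) →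
      Filter.Tendsto
        (fun n : ℕ => (((-1 : ℝ) / n : ℝ) : EReal) * elog2
          (∑ p ∈ Finset.univ.filter
              (fun p : (Fin n → X) × (Fin n → Y) =>
                ENNReal.ofReal (g n * (2 : ℝ) ^ ((n : ℝ) * r)) *
                    (prodDist n (margX P) p.1 * PhiY Y n p.2) ≤ prodJoint n P p),
            prodJoint n P p))
        Filter.atTop (nhds ⊤)) := by
  constructor
  · intro hr
    have hgpos : ∀ n, 0 < g n := fun n =>
      (by positivity : (0:ℝ) < ((n : ℝ) + 1) ^ (Fintype.card Y)).trans (hg_big n)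
    change Tendsto (fun n : ℕ => (((-1 : ℝ) / n : ℝ) : EReal) * elog2 (evp P g r n)) atTop _
    rw [tendsto_order]
    constructor
    · intro a ha
      filter_upwards [eventually_gt_atTop 0] with n hn
      exact ha.trans_le (sup_le hP hg_big r hn)
    · intro a ha
      obtain ⟨c, hc1, hc2⟩ := EReal.lt_iff_exists_real_btwn.1 ha
      set G := (⨆ t : {t : ℝ // 0 ≤ t},
          ((t.1 : ℝ) : EReal) * ((r : EReal) - renyiMI (ENNReal.ofReal (1 + t.1)) P)) with hG
      have hG0 : 0 ≤ G := by
        refine le_trans ?_ (le_iSup _ (⟨0, le_rfl⟩ : {t : ℝ // 0 ≤ t}))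
        simp
      have hGt : G ≠ ⊤ := (hc1.trans_le le_top).ne
      have hGb : G ≠ ⊥ := fun h => by rw [h] at hG0; simp at hG0
      have hGr : G = ((G.toReal : ℝ) : EReal) := (EReal.coe_toReal hGt hGb).symm
      have hlt : G.toReal < c := by rw [hGr] at hc1; exact_mod_cast hc1
      obtain ⟨u, hu, hev⟩ := upper_part hP hgpos hg_subexp hr (sub_pos.2 hlt)
      have hu' : u ≤ G.toReal := by
        rw [← hG, hGr] at hu; exact_mod_cast hu
      filter_upwards [hev] with n hn
      refine lt_of_le_of_lt (hn.trans ?_) hc2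
      rw [EReal.coe_le_coe_iff]; linarith
  · intro hr
    change Tendsto (fun n : ℕ => (((-1 : ℝ) / n : ℝ) : EReal) * elog2 (evp P g r n)) atTop _
    refine tendsto_const_nhds.congr' ?_
    filter_upwards [eventually_gt_atTop 0] with n hn
    have hn' : (0:ℝ) < n := by exact_mod_cast hn
    rw [evp_zero hP hg_big hr n]
    simp only [elog2, if_true]
    rw [EReal.coe_mul_bot_of_neg (div_neg_of_neg_of_pos (by norm_num) hn')]

end RST
end
end

section
/- Let W: X → Y be a discrete memoryless channel on finite alphabets, α ∈ (0,1) and r ≥ 0. Then max_{α≤β≤1} [α(1−β)/(β(1−α))](I_β(W) − r) = max over input distributions P_X of the minimum over channels Ŵ: X → Y of { [α/(1−α)]·D(P_X·Ŵ ‖ P_X·W) + max{I_1(X:Y)_{P_X·Ŵ} − r, 0} }, where the minimization is over the set of all channels from X to Y. -/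
open scoped ENNReal NNReal BigOperators Classical
open Filter

noncomputable section

namespace RST


open Finset in
/-- A convex minimax (alternative) lemma. -/
lemma minimax_aux {ι Z : Type*} [Fintype ι] [Nonempty Z] (g : ι → Z → ℝ)
    (hconv : ∀ z1 z2 (s t : ℝ), 0 ≤ s → 0 ≤ t → s + t = 1 →
      ∃ z, ∀ i, g i z ≤ s * g i z1 + t * g i z2)
    (h : ∀ z, ∃ i, 0 ≤ g i z) :
    ∃ μ : ι → ℝ, (∀ i, 0 ≤ μ i) ∧ ∑ i, μ i = 1 ∧ ∀ z, 0 ≤ ∑ i, μ i * g i z := by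
  set A : Set (ι → ℝ) := Set.univ.pi (fun _ => Set.Iio 0) with hA
  set C : Set (ι → ℝ) := {u | ∃ z, ∀ i, g i z ≤ u i} with hC
  have hAo : IsOpen A := isOpen_set_pi Set.finite_univ (fun _ _ => isOpen_Iio)
  have hAc : Convex ℝ A := convex_pi (fun _ _ => convex_Iio 0)
  have hCc : Convex ℝ C := by
    rintro u ⟨z1, h1⟩ v ⟨z2, h2⟩ s t hs ht hst
    obtain ⟨z, hz⟩ := hconv z1 z2 s t hs ht hst
    refine ⟨z, fun i => (hz i).trans ?_⟩
    simp only [Pi.add_apply, Pi.smul_apply, smul_eq_mul]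
    exact add_le_add (mul_le_mul_of_nonneg_left (h1 i) hs) (mul_le_mul_of_nonneg_left (h2 i) ht)
  have hd : Disjoint A C := by
    rw [Set.disjoint_left]
    rintro u hu ⟨z, hz⟩
    obtain ⟨i, hi⟩ := h z
    have h1 := hz i
    have h2 : u i < 0 := hu i (Set.mem_univ i)
    linarith
  obtain ⟨f, s, hfA, hfC⟩ := geometric_hahn_banach_open hAc hAo hCc hd
  set m : ι → ℝ := fun i => f (Pi.single i 1) with hm
  have hf : ∀ u : ι → ℝ, f u = ∑ i, m i * u i := by
    intro u
    conv_lhs => rw [← Finset.univ_sum_single u]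
    rw [map_sum]
    refine Finset.sum_congr rfl fun i _ => ?_
    have : (Pi.single i (u i) : ι → ℝ) = u i • Pi.single i 1 := by
      rw [← Pi.single_smul]; simp
    rw [this, map_smul, smul_eq_mul, mul_comm]
  obtain ⟨z0⟩ := ‹Nonempty Z›
  have hm0 : ∀ i, 0 ≤ m i := by
    intro i
    by_contra hneg
    push Not at hneg
    have key : ∀ K : ℝ, 0 ≤ K → s ≤ f (fun i => g i z0) + K * m i := by
      intro K hK
      have : f ((fun i => g i z0) + K • Pi.single i 1) = f (fun i => g i z0) + K * m i := by
        rw [map_add, map_smul, smul_eq_mul]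
      rw [← this]
      refine hfC _ ⟨z0, fun j => ?_⟩
      simp only [Pi.add_apply, Pi.smul_apply, smul_eq_mul]
      have : 0 ≤ (Pi.single i 1 : ι → ℝ) j := by
        by_cases hij : j = i
        · subst hij; simp
        · simp [hij]
      nlinarith [mul_nonneg hK this]
    have k0 := key 0 le_rfl
    have k1 := key ((f (fun i => g i z0) - s + 1) / (- m i))
      (div_nonneg (by linarith) (by linarith))
    have : (f (fun i => g i z0) - s + 1) / (- m i) * m i = -(f (fun i => g i z0) - s + 1) := by
      rw [div_neg, neg_mul, div_mul_cancel₀ _ hneg.ne]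
    linarith
  have hneg : ∀ ε : ℝ, 0 < ε → -(ε * ∑ i, m i) < s := by
    intro ε hε
    have := hfA (fun _ => -ε) (fun i _ => by simpa using hε)
    rw [hf] at this
    rw [← Finset.sum_mul] at this
    linarith
  have hM0 : 0 ≤ ∑ i, m i := Finset.sum_nonneg fun i _ => hm0 i
  have hs : 0 ≤ s := by
    by_contra hs
    push Not at hs
    have := hneg (-s / (∑ i, m i + 1)) (div_pos (by linarith) (by linarith))
    have h2 : -s / (∑ i, m i + 1) * ∑ i, m i ≤ -s := by
      rw [div_mul_eq_mul_div, div_le_iff₀ (by linarith)]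
      nlinarith
    linarith
  have hM : 0 < ∑ i, m i := by
    rcases hM0.lt_or_eq with h1 | h1
    · exact h1
    · exfalso
      have hz : ∀ i, m i = 0 := fun i =>
        (Finset.sum_eq_zero_iff_of_nonneg (fun i _ => hm0 i)).1 h1.symm i (Finset.mem_univ i)
      have h2 := hneg 1 one_pos
      have h3 := hfC (fun i => g i z0) ⟨z0, fun i => le_rfl⟩
      rw [hf] at h3
      simp [hz] at h3 h2
      linarith
  refine ⟨fun i => m i / ∑ j, m j, fun i => div_nonneg (hm0 i) hM0, ?_, fun z => ?_⟩
  · rw [← Finset.sum_div, div_self hM.ne']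
  · have h3 := hfC (fun i => g i z) ⟨z, fun i => le_rfl⟩
    rw [hf] at h3
    have : ∑ i, m i / (∑ j, m j) * g i z = (∑ i, m i * g i z) / ∑ j, m j := by
      rw [Finset.sum_div]
      exact Finset.sum_congr rfl fun i _ => by ring
    rw [this]
    exact div_nonneg (hs.trans h3) hM0

/-- Tangent inequality for `v log₂ (v/q)`. -/
lemma tangent_aux (v q m : ℝ) (hv : 0 ≤ v) (hq : 0 < q) (hm : 0 < m) :
    v * Real.logb 2 m + (v - m * q) / Real.log 2 ≤ v * Real.logb 2 (v / q) := by
  have h2 : 0 < Real.log 2 := Real.log_pos one_lt_two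
  simp only [Real.logb]
  rw [mul_div_assoc', mul_div_assoc', ← add_div]
  apply div_le_div_of_nonneg_right _ h2.le
  rcases hv.eq_or_lt with rfl | hv
  · simp; positivity
  · have h := Real.log_le_sub_one_of_pos (x := m * q / v) (by positivity)
    rw [Real.log_div (by positivity) hv.ne', Real.log_mul hm.ne' hq.ne'] at h
    rw [Real.log_div hv.ne' hq.ne']
    have h3 := mul_le_mul_of_nonneg_left h hv.le
    have : v * (m * q / v - 1) = m * q - v := by field_simp
    nlinarith

lemma logsum_aux (v1 v2 q1 q2 s t : ℝ) (hv1 : 0 ≤ v1) (hv2 : 0 ≤ v2) (hq1 : 0 < q1) (hq2 : 0 < q2)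
    (hs : 0 ≤ s) (ht : 0 ≤ t) (hst : s + t = 1) :
    (s * v1 + t * v2) * Real.logb 2 ((s * v1 + t * v2) / (s * q1 + t * q2)) ≤
      s * (v1 * Real.logb 2 (v1 / q1)) + t * (v2 * Real.logb 2 (v2 / q2)) := by
  have hv : 0 ≤ s * v1 + t * v2 := by positivity
  have hq : 0 < s * q1 + t * q2 := by
    rcases hs.eq_or_lt with rfl | hs
    · have : t = 1 := by linarith
      subst this; simpa using hq2
    · positivity
  rcases hv.eq_or_lt with h0 | h0
  · rw [← h0]
    have e1 : 0 ≤ s * v1 := by positivity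
    have e2 : 0 ≤ t * v2 := by positivity
    have e3 : s * v1 = 0 := by linarith
    have e4 : t * v2 = 0 := by linarith
    rw [← mul_assoc, ← mul_assoc, e3, e4]; simp
  · set m := (s * v1 + t * v2) / (s * q1 + t * q2) with hm
    have hm0 : 0 < m := div_pos h0 hq
    have a1 := mul_le_mul_of_nonneg_left (tangent_aux v1 q1 m hv1 hq1 hm0) hs
    have a2 := mul_le_mul_of_nonneg_left (tangent_aux v2 q2 m hv2 hq2 hm0) ht
    have e : m * (s * q1 + t * q2) = s * v1 + t * v2 := by
      rw [hm]; field_simp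
    have : s * ((v1 - m * q1) / Real.log 2) + t * ((v2 - m * q2) / Real.log 2) = 0 := by
      rw [mul_div_assoc', mul_div_assoc', ← add_div]
      rw [div_eq_zero_iff]; left; linarith
    nlinarith

/-- Gibbs inequality. -/
lemma gibbs_aux {ι : Type*} [Fintype ι] (R u : ι → ℝ) (hR : ∀ z, 0 ≤ R z) (hR1 : ∑ z, R z = 1)
    (hu : ∀ z, 0 ≤ u z) (hRu : ∀ z, R z ≠ 0 → 0 < u z) :
    0 < ∑ z, u z ∧ - Real.logb 2 (∑ z, u z) ≤ ∑ z, R z * Real.logb 2 (R z / u z) := by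
  have hS : 0 < ∑ z, u z := by
    obtain ⟨z, hz⟩ : ∃ z, R z ≠ 0 := by
      by_contra hcon
      push Not at hcon
      simp [hcon] at hR1
    exact Finset.sum_pos' (fun z _ => hu z) ⟨z, Finset.mem_univ z, hRu z hz⟩
  refine ⟨hS, ?_⟩
  set S := ∑ z, u z with hSd
  have h2 : 0 < Real.log 2 := Real.log_pos one_lt_two
  have key : ∀ z, R z * Real.logb 2 S⁻¹ + (R z - S⁻¹ * u z) / Real.log 2
      ≤ R z * Real.logb 2 (R z / u z) := by
    intro z
    by_cases hz : R z = 0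
    · rw [hz]; simp only [zero_mul, zero_add, zero_sub]
      apply div_nonpos_of_nonpos_of_nonneg _ h2.le
      have := mul_nonneg (inv_nonneg.2 hS.le) (hu z)
      linarith
    · exact tangent_aux _ _ _ (hR z) (hRu z hz) (inv_pos.2 hS)
  have := Finset.sum_le_sum (fun z (_ : z ∈ Finset.univ) => key z)
  rw [Finset.sum_add_distrib, ← Finset.sum_mul, ← Finset.sum_div, Finset.sum_sub_distrib,
    ← Finset.mul_sum, hR1, ← hSd, inv_mul_cancel₀ hS.ne', Real.logb_inv] at this
  simpa using this

lemma elog2_ofReal_s8 (s : ℝ) (hs : 0 < s) : elog2 (ENNReal.ofReal s) = ((Real.logb 2 s : ℝ) : EReal) := by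
  unfold elog2
  rw [if_neg (by simpa using hs), if_neg ENNReal.ofReal_ne_top, ENNReal.toReal_ofReal hs.le]

lemma ereal_coe_max (x y : ℝ) : ((max x y : ℝ) : EReal) = max (x : EReal) (y : EReal) :=
  EReal.coe_strictMono.monotone.map_max

lemma ereal_coe_sum {ι : Type*} (s : Finset ι) (f : ι → ℝ) :
    ((∑ z ∈ s, f z : ℝ) : EReal) = ∑ z ∈ s, (f z : EReal) := by
  induction s using Finset.induction_on with
  | empty => simp
  | insert a s ha ih => rw [Finset.sum_insert ha, Finset.sum_insert ha, EReal.coe_add, ih]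

lemma renyiD_one_eq {ι : Type*} [Fintype ι] (P Q : ι → ℝ≥0∞) (hP : ∀ z, P z ≠ ⊤) (hQ : ∀ z, Q z ≠ ⊤)
    (h : ∀ z, Q z = 0 → P z = 0) :
    renyiD 1 P Q = ((∑ z, (P z).toReal * Real.logb 2 ((P z).toReal / (Q z).toReal) : ℝ) : EReal) := by
  unfold renyiD
  rw [if_neg one_ne_zero, if_pos rfl, ereal_coe_sum]
  refine Finset.sum_congr rfl fun z _ => ?_
  by_cases hz : P z = 0
  · simp [hz]
  · have hq : Q z ≠ 0 := fun h0 => hz (h z h0)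
    unfold elog2
    rw [if_neg (by simp [ENNReal.div_eq_zero_iff, hz, hQ z]),
      if_neg (by simp [ENNReal.div_eq_top, hq, hP z]), ENNReal.toReal_div, EReal.coe_mul]

lemma renyiD_one_top {ι : Type*} [Fintype ι] (P Q : ι → ℝ≥0∞) (hP : ∀ z, P z ≠ ⊤) (hQ : ∀ z, Q z ≠ ⊤)
    (h : ∃ z, Q z = 0 ∧ P z ≠ 0) : renyiD 1 P Q = ⊤ := by
  unfold renyiD
  rw [if_neg one_ne_zero, if_pos rfl]
  obtain ⟨z0, hq0, hp0⟩ := h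
  have hnb : ∀ z, ((P z).toReal : EReal) * elog2 (P z / Q z) ≠ ⊥ := by
    intro z
    by_cases hz : P z = 0
    · simp [hz]
    · have hpos : 0 < (P z).toReal := ENNReal.toReal_pos hz (hP z)
      unfold elog2
      rw [if_neg (by simp [ENNReal.div_eq_zero_iff, hz, hQ z])]
      split_ifs
      · rw [EReal.coe_mul_top_of_pos hpos]; simp
      · rw [← EReal.coe_mul]; exact EReal.coe_ne_bot _
  have h0 : ((P z0).toReal : EReal) * elog2 (P z0 / Q z0) = ⊤ := by
    have hpos : 0 < (P z0).toReal := ENNReal.toReal_pos hp0 (hP z0)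
    unfold elog2
    rw [hq0, ENNReal.div_zero hp0, if_neg (by simp), if_pos rfl, EReal.coe_mul_top_of_pos hpos]
  rw [← Finset.add_sum_erase _ _ (Finset.mem_univ z0), h0]
  apply EReal.top_add_of_ne_bot
  have : ∀ s : Finset ι, ∑ z ∈ s, ((P z).toReal : EReal) * elog2 (P z / Q z) ≠ ⊥ := by
    intro s
    induction s using Finset.induction_on with
    | empty => simp
    | insert a s ha ih =>
      rw [Finset.sum_insert ha, Ne, EReal.add_eq_bot_iff]
      exact fun hh => hh.elim (hnb a) ih
  exact this _

lemma le_renyiD_iff {ι : Type*} [Fintype ι] (P Q : ι → ℝ≥0∞) (hP : ∀ z, P z ≠ ⊤) (hQ : ∀ z, Q z ≠ ⊤)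
    (β : ℝ) (h0 : 0 < β) (h1 : β < 1) (d : ℝ) :
    (d : EReal) ≤ renyiD (ENNReal.ofReal β) P Q ↔
      ∑ z, (P z).toReal ^ β * (Q z).toReal ^ (1 - β) ≤ (2 : ℝ) ^ ((β - 1) * d) := by
  unfold renyiD
  rw [if_neg (by simpa using h0), if_neg (by simpa using h1.ne), if_neg ENNReal.ofReal_ne_top,
    ENNReal.toReal_ofReal h0.le]
  have hS : ∑ z, P z ^ β * Q z ^ (1 - β) =
      ENNReal.ofReal (∑ z, (P z).toReal ^ β * (Q z).toReal ^ (1 - β)) := by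
    rw [ENNReal.ofReal_sum_of_nonneg (fun z _ => by positivity)]
    refine Finset.sum_congr rfl fun z _ => ?_
    rw [ENNReal.ofReal_mul (by positivity), ← ENNReal.ofReal_rpow_of_nonneg (by positivity) h0.le,
      ← ENNReal.ofReal_rpow_of_nonneg (by positivity) (by linarith), ENNReal.ofReal_toReal (hP z),
      ENNReal.ofReal_toReal (hQ z)]
  rw [hS]
  set S := ∑ z, (P z).toReal ^ β * (Q z).toReal ^ (1 - β) with hSd
  have hS0 : 0 ≤ S := Finset.sum_nonneg fun z _ => by positivity
  have hinv : (β - 1)⁻¹ < 0 := inv_lt_zero.2 (by linarith)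
  rcases hS0.eq_or_lt with h | h
  · rw [← h]
    have : elog2 (ENNReal.ofReal 0) = ⊥ := by simp [elog2]
    rw [this, EReal.coe_mul_bot_of_neg hinv]
    simp; positivity
  · rw [elog2_ofReal_s8 S h, ← EReal.coe_mul, EReal.coe_le_coe_iff, ← Real.logb_le_iff_le_rpow one_lt_two h,
      inv_mul_eq_div, le_div_iff_of_neg (by linarith), mul_comm d]

lemma IsDist.ne_top {X : Type*} [Fintype X] {P : X → ℝ≥0∞} (h : IsDist P) (x : X) : P x ≠ ⊤ := by
  intro hx
  have : P x ≤ ∑ x, P x := Finset.single_le_sum (fun _ _ => zero_le) (Finset.mem_univ x)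
  rw [h, hx] at this
  simp at this

lemma IsDist.toReal_sum {X : Type*} [Fintype X] {P : X → ℝ≥0∞} (h : IsDist P) :
    ∑ x, (P x).toReal = 1 := by
  rw [← ENNReal.toReal_sum (fun x _ => h.ne_top x), h]; simp

lemma isDist_ofReal {X : Type*} [Fintype X] {p : X → ℝ} (h0 : ∀ x, 0 ≤ p x) (h1 : ∑ x, p x = 1) :
    IsDist (fun x => ENNReal.ofReal (p x)) := by
  unfold IsDist
  rw [← ENNReal.ofReal_sum_of_nonneg (fun x _ => h0 x), h1]; simp

lemma margX_joint {X Y : Type*} [Fintype X] [Fintype Y] (P : X → ℝ≥0∞) (V : X → Y → ℝ≥0∞)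
    (hV : IsChannel V) : margX (joint P V) = P := by
  funext x
  simp only [margX, joint]
  rw [← Finset.mul_sum, hV x, mul_one]

lemma IsDist.joint {X Y : Type*} [Fintype X] [Fintype Y] {P : X → ℝ≥0∞} {V : X → Y → ℝ≥0∞}
    (hP : IsDist P) (hV : IsChannel V) : IsDist (joint P V) := by
  unfold IsDist
  rw [Fintype.sum_prod_type]
  simp only [RST.joint, ← Finset.mul_sum]
  simp only [hV _, mul_one]
  exact hP

lemma renyiMI_joint {X Y : Type*} [Fintype X] [Fintype Y] (b : ℝ≥0∞) (P : X → ℝ≥0∞)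
    (V : X → Y → ℝ≥0∞) (hV : IsChannel V) :
    renyiMI b (joint P V) =
      ⨅ Q : {Q : Y → ℝ≥0∞ // IsDist Q}, renyiD b (joint P V) (joint P (fun _ => Q.1)) := by
  unfold renyiMI
  rw [margX_joint P V hV]
  rfl

lemma renyiD_one_nonneg {ι : Type*} [Fintype ι] (P Q : ι → ℝ≥0∞) (hP : IsDist P) (hQ : IsDist Q) :
    0 ≤ renyiD 1 P Q := by
  by_cases h : ∀ z, Q z = 0 → P z = 0
  · rw [renyiD_one_eq P Q hP.ne_top hQ.ne_top h]
    have := (gibbs_aux (fun z => (P z).toReal) (fun z => (Q z).toReal) (fun z => by positivity)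
      hP.toReal_sum (fun z => by positivity) (fun z hz => ENNReal.toReal_pos
        (fun h0 => hz (by simp [h z h0])) (hQ.ne_top z))).2
    rw [hQ.toReal_sum] at this
    simp only [Real.logb_one, neg_zero] at this
    exact_mod_cast this
  · push Not at h
    rw [renyiD_one_top P Q hP.ne_top hQ.ne_top h]
    exact le_top

lemma renyiD_one_joint {X Y : Type*} [Fintype X] [Fintype Y] {P : X → ℝ≥0∞} {V U : X → Y → ℝ≥0∞}
    (hP : IsDist P) (hV : IsChannel V) (hU : IsChannel U) (h : ∀ x y, U x y = 0 → V x y = 0) :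
    renyiD 1 (joint P V) (joint P U) = ((∑ x, (P x).toReal * ∑ y, (V x y).toReal *
      Real.logb 2 ((V x y).toReal / (U x y).toReal) : ℝ) : EReal) := by
  rw [renyiD_one_eq _ _ (hP.joint hV).ne_top (hP.joint hU).ne_top]
  · rw [Fintype.sum_prod_type]
    congr 1
    refine Finset.sum_congr rfl fun x _ => ?_
    rw [Finset.mul_sum]
    refine Finset.sum_congr rfl fun y _ => ?_
    simp only [joint, ENNReal.toReal_mul]
    by_cases hp : (P x).toReal = 0
    · simp [hp]
    · rw [mul_div_mul_left _ _ hp, mul_assoc]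
  · rintro ⟨x, y⟩
    simp only [joint, mul_eq_zero]
    rintro (h1 | h1)
    · exact Or.inl h1
    · exact Or.inr (h x y h1)

lemma lower_aux {X Y : Type*} [Fintype X] [Fintype Y]
    (W V : X → Y → ℝ≥0∞) (hW : IsChannel W) (hV : IsChannel V)
    (a lam β : ℝ) (ha : 0 < a) (hl0 : 0 < lam) (hl1 : lam ≤ 1) (hβ0 : 0 < β) (hβ1 : β < 1)
    (hal : a * (1 - β) = lam * β) (r d : ℝ)
    (P : X → ℝ≥0∞) (hP : IsDist P)
    (hd : (d : EReal) ≤ renyiMI (ENNReal.ofReal β) (joint P W)) :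
    ((lam * (d - r) : ℝ) : EReal) ≤ (a : EReal) * renyiD 1 (joint P V) (joint P W) +
            max (renyiMI 1 (joint P V) - (r : EReal)) 0 := by
  have hPV := hP.joint hV
  have hPW := hP.joint hW
  by_cases hac : ∀ z, joint P W z = 0 → joint P V z = 0
  swap
  · push Not at hac
    rw [renyiD_one_top _ _ hPV.ne_top hPW.ne_top hac, EReal.coe_mul_top_of_pos ha,
      EReal.top_add_of_ne_bot]
    · exact le_top
    · intro h
      have := le_max_right (renyiMI 1 (joint P V) - (r : EReal)) 0
      rw [h] at this
      simp at this
  rw [renyiD_one_eq _ _ hPV.ne_top hPW.ne_top hac]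
  set D := ∑ z, (joint P V z).toReal * Real.logb 2 ((joint P V z).toReal / (joint P W z).toReal)
    with hD
  have hI : ((d - a * D / lam : ℝ) : EReal) ≤ renyiMI 1 (joint P V) := by
    rw [renyiMI_joint _ _ _ hV]
    refine le_iInf fun Q => ?_
    have hQc : IsChannel (fun _ : X => Q.1) := fun _ => Q.2
    have hPQ := hP.joint hQc
    by_cases hac2 : ∀ z, joint P (fun _ => Q.1) z = 0 → joint P V z = 0
    swap
    · push Not at hac2
      rw [renyiD_one_top _ _ hPV.ne_top hPQ.ne_top hac2]
      exact le_top
    rw [renyiD_one_eq _ _ hPV.ne_top hPQ.ne_top hac2, EReal.coe_le_coe_iff]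
    set E := ∑ z, (joint P V z).toReal *
      Real.logb 2 ((joint P V z).toReal / (joint P (fun _ => Q.1) z).toReal) with hE
    rw [renyiMI_joint _ _ _ hW] at hd
    have hd' := (le_renyiD_iff _ _ hPW.ne_top hPQ.ne_top β hβ0 hβ1 d).1 (hd.trans (iInf_le _ Q))
    have hposW : ∀ z, (joint P V z).toReal ≠ 0 → 0 < (joint P W z).toReal := fun z hz =>
      ENNReal.toReal_pos (fun h0 => hz (by simp [hac z h0])) (hPW.ne_top z)
    have hposQ : ∀ z, (joint P V z).toReal ≠ 0 → 0 < (joint P (fun _ => Q.1) z).toReal :=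
      fun z hz => ENNReal.toReal_pos (fun h0 => hz (by simp [hac2 z h0])) (hPQ.ne_top z)
    obtain ⟨hS, hG⟩ := gibbs_aux (fun z => (joint P V z).toReal)
      (fun z => (joint P W z).toReal ^ β * (joint P (fun _ => Q.1) z).toReal ^ (1 - β))
      (fun z => by positivity) hPV.toReal_sum (fun z => by positivity)
      (fun z hz => mul_pos (Real.rpow_pos_of_pos (hposW z hz) _)
        (Real.rpow_pos_of_pos (hposQ z hz) _))
    rw [← Real.logb_le_iff_le_rpow one_lt_two hS] at hd'
    have hsum : ∑ z, (joint P V z).toReal * Real.logb 2 ((joint P V z).toReal /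
        ((joint P W z).toReal ^ β * (joint P (fun _ => Q.1) z).toReal ^ (1 - β))) =
        β * D + (1 - β) * E := by
      rw [hD, hE, Finset.mul_sum, Finset.mul_sum, ← Finset.sum_add_distrib]
      refine Finset.sum_congr rfl fun z _ => ?_
      by_cases hz : (joint P V z).toReal = 0
      · simp [hz]
      · have h1 := hposW z hz
        have h2 := hposQ z hz
        rw [Real.logb_div hz (by positivity), Real.logb_mul (by positivity) (by positivity),
          Real.logb_rpow_eq_mul_logb_of_pos h1, Real.logb_rpow_eq_mul_logb_of_pos h2,
          Real.logb_div hz h1.ne', Real.logb_div hz h2.ne']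
        ring
    rw [hsum] at hG
    have h3 : (1 - β) * d ≤ β * D + (1 - β) * E := by linarith
    have h4 : a * D / lam = β * D / (1 - β) := by
      rw [div_eq_div_iff hl0.ne' (by linarith)]
      linear_combination D * hal
    rw [h4]
    have h5 : β * D / (1 - β) * (1 - β) = β * D := div_mul_cancel₀ _ (by linarith)
    by_contra hcon
    push Not at hcon
    nlinarith
  have hI2 : ((max (d - a * D / lam - r) 0 : ℝ) : EReal) ≤ max (renyiMI 1 (joint P V) - (r : EReal)) 0 := by
    rw [ereal_coe_max, EReal.coe_sub]
    exact max_le_max (EReal.sub_le_sub hI le_rfl) (by simp)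
  refine le_trans ?_ (add_le_add le_rfl hI2)
  rw [← EReal.coe_mul, ← EReal.coe_add, EReal.coe_le_coe_iff]
  have h6 : a * D / lam * lam = a * D := div_mul_cancel₀ _ hl0.ne'
  have h7 := le_max_left (d - a * D / lam - r) 0
  have h8 := le_max_right (d - a * D / lam - r) 0
  set M := max (d - a * D / lam - r) 0
  nlinarith [mul_le_mul_of_nonneg_left h7 hl0.le]

/-- The second minimax step. -/
lemma upper_cap {X Y : Type*} [Fintype X] [Fintype Y] [Nonempty Y]
    (W : X → Y → ℝ≥0∞) (hW : IsChannel W) (β d : ℝ) (hβ0 : 0 < β) (hβ1 : β < 1)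
    (h : ∀ q : Y → ℝ, (∀ y, 0 < q y) → ∑ y, q y = 1 →
      ∃ x, ∑ y, (W x y).toReal ^ β * q y ^ (1 - β) ≤ (2 : ℝ) ^ ((β - 1) * d)) :
    (d : EReal) ≤ renyiCap (ENNReal.ofReal β) W := by
  let Z := {q : Y → ℝ // (∀ y, 0 < q y) ∧ ∑ y, q y = 1}
  set t := (2 : ℝ) ^ ((β - 1) * d) with ht
  have hcard : (0 : ℝ) < Fintype.card Y := by exact_mod_cast Fintype.card_pos
  let U : Z := ⟨fun _ => (Fintype.card Y : ℝ)⁻¹, fun _ => inv_pos.2 hcard, by simp⟩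
  have hmix : ∀ (q1 q2 : Y → ℝ) (s t : ℝ), (∑ y, q1 y = 1) → (∑ y, q2 y = 1) → s + t = 1 →
      ∑ y, (s * q1 y + t * q2 y) = 1 := by
    intro q1 q2 s t h1 h2 hst
    rw [Finset.sum_add_distrib, ← Finset.mul_sum, ← Finset.mul_sum, h1, h2]; linarith
  have : Nonempty Z := ⟨U⟩
  obtain ⟨μ, hμ0, hμ1, hμ⟩ := minimax_aux
    (fun (x : X) (q : Z) => t - ∑ y, (W x y).toReal ^ β * q.1 y ^ (1 - β)) (by
      intro z1 z2 s u hs hu hsu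
      refine ⟨⟨fun y => s * z1.1 y + u * z2.1 y, fun y => ?_, hmix _ _ _ _ z1.2.2 z2.2.2 hsu⟩, fun x => ?_⟩
      · have a1 := z1.2.1 y
        have a2 := z2.2.1 y
        rcases hs.eq_or_lt with rfl | hs
        · have : u = 1 := by linarith
          subst this; simpa using a2
        · positivity
      · have : s * ∑ y, (W x y).toReal ^ β * z1.1 y ^ (1 - β) +
            u * ∑ y, (W x y).toReal ^ β * z2.1 y ^ (1 - β) ≤
            ∑ y, (W x y).toReal ^ β * (s * z1.1 y + u * z2.1 y) ^ (1 - β) := by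
          rw [Finset.mul_sum, Finset.mul_sum, ← Finset.sum_add_distrib]
          refine Finset.sum_le_sum fun y _ => ?_
          have hc := (Real.concaveOn_rpow (p := 1 - β) (by linarith) (by linarith)).2
            (Set.mem_Ici.2 (z1.2.1 y).le) (Set.mem_Ici.2 (z2.2.1 y).le) hs hu hsu
          simp only [smul_eq_mul] at hc
          have hw : 0 ≤ (W x y).toReal ^ β := by positivity
          nlinarith [mul_le_mul_of_nonneg_left hc hw]
        have : t = s * t + u * t := by rw [← add_mul, hsu, one_mul]
        dsimp only
        linarith)
    (by
      intro q
      obtain ⟨x, hx⟩ := h q.1 q.2.1 q.2.2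
      exact ⟨x, sub_nonneg.2 hx⟩)
  have hμ' : ∀ q : Y → ℝ, (∀ y, 0 < q y) → ∑ y, q y = 1 →
      ∑ x, μ x * ∑ y, (W x y).toReal ^ β * q y ^ (1 - β) ≤ t := by
    intro q h1 h2
    have := hμ ⟨q, h1, h2⟩
    simp only [mul_sub, Finset.sum_sub_distrib, ← Finset.sum_mul, hμ1] at this
    linarith
  have hμ2 : ∀ q : Y → ℝ, (∀ y, 0 ≤ q y) → ∑ y, q y = 1 →
      ∑ x, μ x * ∑ y, (W x y).toReal ^ β * q y ^ (1 - β) ≤ t := by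
    intro q h1 h2
    have hlim : Filter.Tendsto (fun ε : ℝ => ∑ x, μ x * ∑ y, (W x y).toReal ^ β *
        ((1 - ε) * q y + ε * U.1 y) ^ (1 - β)) (nhdsWithin 0 (Set.Ioo 0 1))
        (nhds (∑ x, μ x * ∑ y, (W x y).toReal ^ β * q y ^ (1 - β))) := by
      have hcont : Continuous (fun ε : ℝ => ∑ x, μ x * ∑ y, (W x y).toReal ^ β *
        ((1 - ε) * q y + ε * U.1 y) ^ (1 - β)) := by
        refine continuous_finsetSum _ fun x _ => continuous_const.mul ?_
        refine continuous_finsetSum _ fun y _ => continuous_const.mul ?_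
        exact Continuous.rpow_const (by fun_prop) (fun _ => Or.inr (by linarith))
      have := (hcont.tendsto 0).mono_left (nhdsWithin_le_nhds (s := Set.Ioo 0 1))
      simpa using this
    have : (nhdsWithin (0 : ℝ) (Set.Ioo 0 1)).NeBot := by
      rw [nhdsWithin_Ioo_eq_nhdsGT one_pos]; infer_instance
    refine le_of_tendsto hlim ?_
    filter_upwards [self_mem_nhdsWithin] with ε hε
    refine hμ' _ (fun y => ?_) (hmix _ _ _ _ h2 U.2.2 (by ring))
    have := mul_pos hε.1 (U.2.1 y)
    have h3 := mul_nonneg (sub_nonneg.2 hε.2.le) (h1 y)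
    linarith
  have hPd := isDist_ofReal hμ0 hμ1
  refine le_trans ?_ (le_iSup (fun P : {P : X → ℝ≥0∞ // IsDist P} =>
    renyiMI (ENNReal.ofReal β) (joint P.1 W)) ⟨_, hPd⟩)
  dsimp only
  rw [renyiMI_joint _ _ _ hW]
  refine le_iInf fun Q => ?_
  have hQc : IsChannel (fun _ : X => Q.1) := fun _ => Q.2
  rw [le_renyiD_iff _ _ (hPd.joint hW).ne_top (hPd.joint hQc).ne_top β hβ0 hβ1]
  refine le_trans (le_of_eq ?_) (hμ2 (fun y => (Q.1 y).toReal) (fun y => by positivity) Q.2.toReal_sum)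
  rw [Fintype.sum_prod_type]
  refine Finset.sum_congr rfl fun x _ => ?_
  rw [Finset.mul_sum]
  refine Finset.sum_congr rfl fun y _ => ?_
  simp only [joint, ENNReal.toReal_mul, ENNReal.toReal_ofReal (hμ0 x)]
  rw [Real.mul_rpow (hμ0 x) (by positivity), Real.mul_rpow (hμ0 x) (by positivity)]
  have : μ x = μ x ^ β * μ x ^ (1 - β) := by
    rw [← Real.rpow_add_of_nonneg (hμ0 x) hβ0.le (by linarith)]; simp
  conv_rhs => rw [this]
  ring

lemma sum_mix {Y : Type*} [Fintype Y] (q1 q2 : Y → ℝ) (s t : ℝ) (h1 : ∑ y, q1 y = 1)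
    (h2 : ∑ y, q2 y = 1) (hst : s + t = 1) : ∑ y, (s * q1 y + t * q2 y) = 1 := by
  rw [Finset.sum_add_distrib, ← Finset.mul_sum, ← Finset.mul_sum, h1, h2]; linarith

/-- The first minimax step. -/
lemma upper_lam {X Y : Type*} [Fintype X] [Fintype Y] [Nonempty Y]
    (W : X → Y → ℝ≥0∞) (hW : IsChannel W) (a r c : ℝ) (ha : 0 < a)
    (P : X → ℝ≥0∞) (hP : IsDist P)
    (h : ∀ V : X → Y → ℝ≥0∞, IsChannel V → (c : EReal) ≤
      (a : EReal) * renyiD 1 (joint P V) (joint P W) +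
            max (renyiMI 1 (joint P V) - (r : EReal)) 0) :
    ∃ lam : ℝ, 0 ≤ lam ∧ lam ≤ 1 ∧ ∀ (v : X → Y → ℝ) (q : Y → ℝ), (∀ x y, 0 ≤ v x y) →
      (∀ x, ∑ y, v x y = 1) → (∀ x y, W x y = 0 → v x y = 0) → (∀ y, 0 < q y) → ∑ y, q y = 1 →
      c ≤ ∑ x, (P x).toReal * ∑ y, (a * (v x y * Real.logb 2 (v x y / (W x y).toReal)) +
        lam * (v x y * Real.logb 2 (v x y / q y))) - lam * r := by
  have hcard : (0 : ℝ) < Fintype.card Y := by exact_mod_cast Fintype.card_pos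
  let Z := {z : (X → Y → ℝ) × (Y → ℝ) // (∀ x y, 0 ≤ z.1 x y) ∧ (∀ x, ∑ y, z.1 x y = 1) ∧
    (∀ x y, W x y = 0 → z.1 x y = 0) ∧ (∀ y, 0 < z.2 y) ∧ ∑ y, z.2 y = 1}
  have hWd : ∀ x, IsDist (W x) := hW
  have : Nonempty Z := ⟨⟨(fun x y => (W x y).toReal, fun _ => (Fintype.card Y : ℝ)⁻¹),
    fun x y => by positivity, fun x => (hWd x).toReal_sum, fun x y h => by simp [h],
    fun _ => inv_pos.2 hcard, by simp⟩⟩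
  let D : Z → ℝ := fun z => ∑ x, (P x).toReal * ∑ y, z.1.1 x y * Real.logb 2 (z.1.1 x y / (W x y).toReal)
  let E : Z → ℝ := fun z => ∑ x, (P x).toReal * ∑ y, z.1.1 x y * Real.logb 2 (z.1.1 x y / z.1.2 y)
  have hconv : ∀ (z1 z2 : Z) (s t : ℝ), 0 ≤ s → 0 ≤ t → s + t = 1 →
      ∃ z, D z ≤ s * D z1 + t * D z2 ∧ E z ≤ s * E z1 + t * E z2 := by
    rintro ⟨⟨v1, q1⟩, a1, a2, a3, a4, a5⟩ ⟨⟨v2, q2⟩, b1, b2, b3, b4, b5⟩ s t hs ht hst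
    dsimp only at a1 a2 a3 a4 a5 b1 b2 b3 b4 b5
    refine ⟨⟨(fun x y => s * v1 x y + t * v2 x y, fun y => s * q1 y + t * q2 y), fun x y => ?_,
      fun x => sum_mix _ _ _ _ (a2 x) (b2 x) hst, fun x y h => ?_, fun y => ?_,
      sum_mix _ _ _ _ a5 b5 hst⟩, ?_, ?_⟩
    · have := a1 x y
      have := b1 x y
      dsimp only
      positivity
    · simp [a3 x y h, b3 x y h]
    · have a1 := a4 y
      have a2 := b4 y
      dsimp only
      rcases hs.eq_or_lt with rfl | hs
      · have : t = 1 := by linarith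
        subst this; simpa using a2
      · positivity
    · simp only [D]
      rw [Finset.mul_sum, Finset.mul_sum, ← Finset.sum_add_distrib]
      refine Finset.sum_le_sum fun x _ => ?_
      rw [mul_left_comm s, mul_left_comm t, ← mul_add]
      refine mul_le_mul_of_nonneg_left ?_ (by positivity)
      rw [Finset.mul_sum, Finset.mul_sum, ← Finset.sum_add_distrib]
      refine Finset.sum_le_sum fun y _ => ?_
      by_cases hw : W x y = 0
      · simp [a3 x y hw, b3 x y hw]
      · have hw' : 0 < (W x y).toReal := ENNReal.toReal_pos hw ((hWd x).ne_top y)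
        have := logsum_aux (v1 x y) (v2 x y) (W x y).toReal (W x y).toReal s t (a1 x y) (b1 x y)
          hw' hw' hs ht hst
        rwa [← add_mul, hst, one_mul] at this
    · simp only [E]
      rw [Finset.mul_sum, Finset.mul_sum, ← Finset.sum_add_distrib]
      refine Finset.sum_le_sum fun x _ => ?_
      rw [mul_left_comm s, mul_left_comm t, ← mul_add]
      refine mul_le_mul_of_nonneg_left ?_ (by positivity)
      rw [Finset.mul_sum, Finset.mul_sum, ← Finset.sum_add_distrib]
      refine Finset.sum_le_sum fun y _ => ?_
      exact logsum_aux _ _ _ _ s t (a1 x y) (b1 x y) (a4 y) (b4 y) hs ht hst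
  have hcz : ∀ z : Z, c ≤ a * D z + max (E z - r) 0 := by
    rintro ⟨⟨v, q⟩, a1, a2, a3, a4, a5⟩
    dsimp only at a1 a2 a3 a4 a5
    have hVc : IsChannel (fun x y => ENNReal.ofReal (v x y)) := fun x => isDist_ofReal (a1 x) (a2 x)
    have hQ := isDist_ofReal (fun y => (a4 y).le) a5
    have h1 := h _ hVc
    rw [renyiD_one_joint hP hVc hW (fun x y hw => by simp [a3 x y hw]), renyiMI_joint _ _ _ hVc] at h1
    have h2 : renyiD 1 (joint P (fun x y => ENNReal.ofReal (v x y)))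
        (joint P (fun _ y => ENNReal.ofReal (q y))) = _ :=
      renyiD_one_joint hP hVc (fun _ => hQ)
        (fun x y hw => absurd hw (by simpa using a4 y))
    have h3 := h1.trans (add_le_add le_rfl (max_le_max (EReal.sub_le_sub (iInf_le _ ⟨_, hQ⟩) le_rfl) le_rfl))
    rw [h2] at h3
    simp only [ENNReal.toReal_ofReal (a1 _ _), ENNReal.toReal_ofReal (a4 _).le] at h3
    rw [← EReal.coe_mul, ← EReal.coe_sub, ← EReal.coe_zero, ← ereal_coe_max, ← EReal.coe_add,
      EReal.coe_le_coe_iff] at h3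
    exact h3
  obtain ⟨μ, hμ0, hμ1, hμ⟩ := minimax_aux
    (fun (b : Bool) (z : Z) => a * D z + (if b then E z - r else 0) - c) (by
      intro z1 z2 s t hs ht hst
      obtain ⟨z, h1, h2⟩ := hconv z1 z2 s t hs ht hst
      refine ⟨z, fun b => ?_⟩
      have hs' : s = 1 - t := by linarith
      cases b
      · simp only [Bool.false_eq_true, if_false]
        have := mul_le_mul_of_nonneg_left h1 ha.le
        subst hs'
        linarith
      · simp only [if_true]
        have := mul_le_mul_of_nonneg_left h1 ha.le
        subst hs'
        linarith)
    (by
      intro z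
      have := hcz z
      rcases max_choice (E z - r) 0 with h1 | h1
      · exact ⟨true, by simp only [if_true]; linarith⟩
      · exact ⟨false, by simp only [Bool.false_eq_true, if_false]; linarith⟩)
  rw [Fintype.sum_bool] at hμ1
  have hf := hμ0 false
  refine ⟨μ true, hμ0 true, by linarith, fun v q a1 a2 a3 a4 a5 => ?_⟩
  have h1 := hμ ⟨(v, q), a1, a2, a3, a4, a5⟩
  rw [Fintype.sum_bool] at h1
  simp only [Bool.false_eq_true, if_false, if_true] at h1
  have h2 : ∑ x, (P x).toReal * ∑ y, (a * (v x y * Real.logb 2 (v x y / (W x y).toReal)) +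
        μ true * (v x y * Real.logb 2 (v x y / q y))) =
        a * D ⟨(v, q), a1, a2, a3, a4, a5⟩ + μ true * E ⟨(v, q), a1, a2, a3, a4, a5⟩ := by
    simp only [D, E]
    rw [Finset.mul_sum, Finset.mul_sum, ← Finset.sum_add_distrib]
    refine Finset.sum_congr rfl fun x _ => ?_
    rw [Finset.sum_add_distrib, ← Finset.mul_sum, ← Finset.mul_sum]
    ring
  rw [h2]
  have h3 : μ false = 1 - μ true := by linarith
  rw [h3] at h1
  linarith

lemma tilt_aux {X Y : Type*} [Fintype X] [Fintype Y] [Nonempty Y]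
    (W : X → Y → ℝ≥0∞) (hW : IsChannel W) (a r c lam β : ℝ) (hβ0 : 0 < β) (hβ1 : β < 1)
    (hl0 : 0 < lam) (hal : a * (1 - β) = lam * β)
    (P : X → ℝ≥0∞) (hP : IsDist P)
    (h : ∀ (v : X → Y → ℝ) (q : Y → ℝ), (∀ x y, 0 ≤ v x y) →
      (∀ x, ∑ y, v x y = 1) → (∀ x y, W x y = 0 → v x y = 0) → (∀ y, 0 < q y) → ∑ y, q y = 1 →
      c ≤ ∑ x, (P x).toReal * ∑ y, (a * (v x y * Real.logb 2 (v x y / (W x y).toReal)) +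
        lam * (v x y * Real.logb 2 (v x y / q y))) - lam * r)
    (q : Y → ℝ) (hq : ∀ y, 0 < q y) (hq1 : ∑ y, q y = 1) :
    ∃ x, ∑ y, (W x y).toReal ^ β * q y ^ (1 - β) ≤ (2 : ℝ) ^ ((β - 1) * (c / lam + r)) := by
  have hWd : ∀ x, IsDist (W x) := hW
  set S : X → ℝ := fun x => ∑ y, (W x y).toReal ^ β * q y ^ (1 - β) with hS
  have hu0 : ∀ x y, 0 ≤ (W x y).toReal ^ β * q y ^ (1 - β) := fun x y => by
    have := hq y
    positivity
  have hS0 : ∀ x, 0 < S x := fun x =>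
    (gibbs_aux (fun y => (W x y).toReal) (fun y => (W x y).toReal ^ β * q y ^ (1 - β))
      (fun y => by positivity) (hWd x).toReal_sum (hu0 x)
      (fun y hy => mul_pos (Real.rpow_pos_of_pos (lt_of_le_of_ne (by positivity) (Ne.symm hy)) _)
        (Real.rpow_pos_of_pos (hq y) _))).1
  have hv1 : ∀ x, ∑ y, (W x y).toReal ^ β * q y ^ (1 - β) / S x = 1 := fun x => by
    rw [← Finset.sum_div]; exact div_self (hS0 x).ne'
  have h1 := h (fun x y => (W x y).toReal ^ β * q y ^ (1 - β) / S x) q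
    (fun x y => div_nonneg (hu0 x y) (hS0 x).le) hv1
    (fun x y hw => by simp [hw, Real.zero_rpow hβ0.ne']) hq hq1
  have h2 : ∀ x, ∑ y, (a * ((W x y).toReal ^ β * q y ^ (1 - β) / S x *
      Real.logb 2 ((W x y).toReal ^ β * q y ^ (1 - β) / S x / (W x y).toReal)) +
        lam * ((W x y).toReal ^ β * q y ^ (1 - β) / S x *
          Real.logb 2 ((W x y).toReal ^ β * q y ^ (1 - β) / S x / q y))) =
      - (lam / (1 - β) * Real.logb 2 (S x)) := by
    intro x
    have : - (lam / (1 - β) * Real.logb 2 (S x)) = ∑ y, ((W x y).toReal ^ β * q y ^ (1 - β) / S x) *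
       (- (lam / (1 - β) * Real.logb 2 (S x))) := by
      rw [← Finset.sum_mul, hv1, one_mul]
    rw [this]
    refine Finset.sum_congr rfl fun y _ => ?_
    by_cases hw : (W x y).toReal = 0
    · simp [hw, Real.zero_rpow hβ0.ne']
    · have hw' : 0 < (W x y).toReal := lt_of_le_of_ne (by positivity) (Ne.symm hw)
      have hq' := hq y
      have hs' := hS0 x
      rw [Real.logb_div (by positivity) hw, Real.logb_div (by positivity) hq'.ne',
        Real.logb_div (by positivity) hs'.ne', Real.logb_mul (by positivity) (by positivity),
          Real.logb_rpow_eq_mul_logb_of_pos hw', Real.logb_rpow_eq_mul_logb_of_pos hq']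
      have ha : a = lam * β / (1 - β) := by
        rw [eq_div_iff (by linarith)]; exact hal
      have hb : 1 - β ≠ 0 := by linarith
      rw [ha]
      field_simp
      ring
  simp only [h2] at h1
  by_contra hcon
  push Not at hcon
  have h3 : ∀ x, - (lam / (1 - β) * Real.logb 2 (S x)) < c + lam * r := by
    intro x
    have h4 := (Real.lt_logb_iff_rpow_lt one_lt_two (hS0 x)).2 (hcon x)
    have hb : 0 < 1 - β := by linarith
    have h5 := mul_lt_mul_of_pos_left h4 (div_pos hl0 hb)
    have h6 : lam / (1 - β) * ((β - 1) * (c / lam + r)) = -(c + lam * r) := by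
      field_simp
      ring
    linarith
  obtain ⟨x0, hx0⟩ : ∃ x, (P x).toReal ≠ 0 := by
    by_contra hc
    push Not at hc
    have := hP.toReal_sum
    simp [hc] at this
  have h7 : ∑ x, (P x).toReal * - (lam / (1 - β) * Real.logb 2 (S x)) <
      ∑ x, (P x).toReal * (c + lam * r) := by
    refine Finset.sum_lt_sum (fun x _ => mul_le_mul_of_nonneg_left (h3 x).le (by positivity))
      ⟨x0, Finset.mem_univ _, mul_lt_mul_of_pos_left (h3 x0) (lt_of_le_of_ne (by positivity) (Ne.symm hx0))⟩
  rw [← Finset.sum_mul, hP.toReal_sum, one_mul] at h7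
  linarith

/-- **Proposition 12 (variational expression).**  For `α ∈ (0,1)` and `r ≥ 0`,
`max_{α ≤ β ≤ 1} (α(1-β))/(β(1-α)) (I_β(W) - r)` equals the max over input
distributions `P_X` of the min over channels `Ŵ : X → Y` of
`α/(1-α) · D(P_X·Ŵ ‖ P_X·W) + |I(X:Y)_{P_X·Ŵ} - r|⁺`. -/
theorem variational_expression
    {X Y : Type*} [Fintype X] [Fintype Y] [Nonempty X] [Nonempty Y]
    (W : X → Y → ℝ≥0∞) (hW : IsChannel W)
    (α : ℝ) (hα0 : 0 < α) (hα1 : α < 1) (r : ℝ) (hr : 0 ≤ r) :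
    (⨆ β : {β : ℝ // α ≤ β ∧ β ≤ 1},
        (((α * (1 - β.1)) / (β.1 * (1 - α)) : ℝ) : EReal) *
          (renyiCap (ENNReal.ofReal β.1) W - (r : EReal))) =
      ⨆ P : {P : X → ℝ≥0∞ // IsDist P},
        ⨅ V : {V : X → Y → ℝ≥0∞ // IsChannel V},
          ((α / (1 - α) : ℝ) : EReal) * renyiD 1 (joint P.1 V.1) (joint P.1 W) +
            max (renyiMI 1 (joint P.1 V.1) - (r : EReal)) 0 := by
  have ha : 0 < α / (1 - α) := div_pos hα0 (by linarith)
  have hWd : ∀ x, IsDist (W x) := hW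
  have hnn : ∀ (P : X → ℝ≥0∞), IsDist P → ∀ V : X → Y → ℝ≥0∞, IsChannel V → (0 : EReal) ≤
      ((α / (1 - α) : ℝ) : EReal) * renyiD 1 (joint P V) (joint P W) +
            max (renyiMI 1 (joint P V) - (r : EReal)) 0 := by
    intro P hP V hV
    refine add_nonneg (EReal.mul_nonneg (by exact_mod_cast ha.le)
      (renyiD_one_nonneg _ _ (hP.joint hV) (hP.joint hW))) (le_max_right _ _)
  have hlam : ∀ β : ℝ, α ≤ β → β < 1 → 0 < (α * (1 - β)) / (β * (1 - α)) ∧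
      (α * (1 - β)) / (β * (1 - α)) ≤ 1 ∧
      α / (1 - α) * (1 - β) = (α * (1 - β)) / (β * (1 - α)) * β := by
    intro β h1 h2
    have hβ : 0 < β := by linarith
    have h3 : 0 < 1 - β := by linarith
    have h4 : 0 < 1 - α := by linarith
    refine ⟨by positivity, ?_, ?_⟩
    · rw [div_le_one (by positivity)]
      nlinarith
    · field_simp
  apply le_antisymm
  · refine iSup_le fun ⟨β, hβα, hβ1⟩ => ?_
    dsimp only
    set RHS := ⨆ P : {P : X → ℝ≥0∞ // IsDist P},
        ⨅ V : {V : X → Y → ℝ≥0∞ // IsChannel V},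
          ((α / (1 - α) : ℝ) : EReal) * renyiD 1 (joint P.1 V.1) (joint P.1 W) +
            max (renyiMI 1 (joint P.1 V.1) - (r : EReal)) 0 with hRHS
    have hR0 : 0 ≤ RHS := by
      have hc : (0 : ℝ) < Fintype.card X := by exact_mod_cast Fintype.card_pos
      have hu : IsDist (fun _ : X => ENNReal.ofReal ((Fintype.card X : ℝ)⁻¹)) :=
        isDist_ofReal (fun _ => (inv_pos.2 hc).le) (by simp)
      exact le_iSup_of_le ⟨_, hu⟩ (le_iInf fun V => hnn _ hu _ V.2)
    rcases hβ1.eq_or_lt with rfl | hβ1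
    · simpa using hR0
    obtain ⟨hl0, hl1, hal⟩ := hlam β hβα hβ1
    set lam := (α * (1 - β)) / (β * (1 - α))
    by_cases htop : RHS = ⊤
    · rw [htop]; exact le_top
    obtain ⟨ρ, hρ⟩ : ∃ ρ : ℝ, RHS = (ρ : EReal) :=
      ⟨RHS.toReal, (EReal.coe_toReal htop (fun hb => by rw [hb] at hR0; simp at hR0)).symm⟩
    have hcap : renyiCap (ENNReal.ofReal β) W ≤ ((ρ / lam + r : ℝ) : EReal) := by
      refine iSup_le fun P => ?_
      by_contra hcon
      push Not at hcon
      obtain ⟨d, hd1, hd2⟩ := EReal.lt_iff_exists_real_btwn.1 hcon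
      have h1 : ((lam * (d - r) : ℝ) : EReal) ≤ RHS :=
        le_iSup_of_le P (le_iInf fun V => lower_aux W V.1 hW V.2 _ lam β ha hl0 hl1
          (by linarith) hβ1 hal r d P.1 P.2 hd2.le)
      rw [hρ, EReal.coe_le_coe_iff] at h1
      rw [EReal.coe_lt_coe_iff] at hd1
      have h2 : lam * (ρ / lam + r - r) = ρ := by field_simp; ring
      have h3 := mul_lt_mul_of_pos_left (sub_lt_sub_right hd1 r) hl0
      linarith
    calc (lam : EReal) * (renyiCap (ENNReal.ofReal β) W - (r : EReal))
        ≤ (lam : EReal) * (((ρ / lam + r : ℝ) : EReal) - (r : EReal)) :=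
          mul_le_mul_of_nonneg_left (EReal.sub_le_sub hcap le_rfl) (by exact_mod_cast hl0.le)
      _ = RHS := by
          rw [hρ, ← EReal.coe_sub, ← EReal.coe_mul]
          congr 1
          field_simp
          ring
  · refine iSup_le fun ⟨P, hP⟩ => ?_
    dsimp only
    by_contra hcon
    push Not at hcon
    obtain ⟨c, hc1, hc2⟩ := EReal.lt_iff_exists_real_btwn.1 hcon
    have hc0 : 0 < c := by
      have : (0 : EReal) < (c : EReal) := by
        refine lt_of_le_of_lt ?_ hc1
        refine le_iSup_of_le ⟨1, hα1.le, le_rfl⟩ ?_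
        simp
      exact_mod_cast this
    obtain ⟨lam, hl0, hl1, hl⟩ := upper_lam W hW _ r c ha P hP
      (fun V hV => le_iInf_iff.1 hc2.le ⟨V, hV⟩)
    have hcard : (0 : ℝ) < Fintype.card Y := by exact_mod_cast Fintype.card_pos
    rcases hl0.eq_or_lt with rfl | hl0
    · have h1 := hl (fun x y => (W x y).toReal) (fun _ => (Fintype.card Y : ℝ)⁻¹)
        (fun x y => by positivity) (fun x => (hWd x).toReal_sum) (fun x y h => by simp [h])
        (fun _ => inv_pos.2 hcard) (by simp)
      have h2 : ∀ x y, (W x y).toReal * Real.logb 2 ((W x y).toReal / (W x y).toReal) = 0 := by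
        intro x y
        by_cases hw : (W x y).toReal = 0
        · simp [hw]
        · simp [div_self hw]
      simp only [h2] at h1
      simp at h1
      linarith
    · set a := α / (1 - α) with had
      have haα : a * (1 - α) = α := div_mul_cancel₀ _ (by linarith)
      set β := a / (a + lam) with hβ
      have hβ0 : 0 < β := by positivity
      have hβ1 : β < 1 := by rw [hβ, div_lt_one (by positivity)]; linarith
      have hβα : α ≤ β := by
        rw [hβ, le_div_iff₀ (by positivity)]
        nlinarith
      have hal : a * (1 - β) = lam * β := by
        rw [hβ]; field_simp; ring
      have hcap := upper_cap W hW β (c / lam + r) hβ0 hβ1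
        (tilt_aux W hW a r c lam β hβ0 hβ1 hl0 hal P hP hl)
      have hle : (α * (1 - β)) / (β * (1 - α)) = lam := by
        have h3 := (hlam β hβα hβ1).2.2
        rw [hal] at h3
        exact (mul_right_cancel₀ hβ0.ne' h3).symm
      refine absurd hc1 (not_lt.2 ?_)
      refine le_iSup_of_le ⟨β, hβα, hβ1.le⟩ ?_
      dsimp only
      rw [hle]
      calc (c : EReal) = (lam : EReal) * (((c / lam + r : ℝ) : EReal) - (r : EReal)) := by
            rw [← EReal.coe_sub, ← EReal.coe_mul]
            congr 1
            field_simp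
            ring
        _ ≤ (lam : EReal) * (renyiCap (ENNReal.ofReal β) W - (r : EReal)) := mul_le_mul_of_nonneg_left (EReal.sub_le_sub hcap le_rfl) (by exact_mod_cast hl0.le)

end RST
end
end
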